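/- arXiv:2603.04303 — 8 statements merged into one kernel-verified Lean document; each statement's English description precedes it below -/
import Mathlib

section
/- Let L be an algebraically closed field, a ∈ Lˣ, and let σ be the automorphism of L(X) fixing L with σ(X) = X + a. For a nonzero β ∈ L(X), β belongs to G_σ if and only if c_β = 1 and m_β ∈ Fsfun_σ(L,ℤ). Equivalently, the map β ↦ m_β restricts to a group isomorphism from G_σ onto Fsfun_σ(L,ℤ). -/
/-- For a field `k` and a ring automorphism `σ` of `k`, `Gsigma σ` is the set of all
elements of `k` of the form `r / σ r` with `r ≠ 0`. -/
def Gsigma {k : Type*} [Field k] (σ : k ≃+* k) : Set k :=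
  {y : k | ∃ r : k, r ≠ 0 ∧ y = r / σ r}

/-!
To `r ∈ K(X)ˣ` attach its leading constant and its divisor, the finitely supported function
recording the orders of vanishing of `r` at the points of `K`. Both are multiplicative, and the
translation `σ` preserves the leading constant and shifts the divisor by `a`. Hence `r / σ r` has
leading constant `1` and its divisor is a difference `n - n(· + a)`; conversely, products of linear
factors realise all such differences. It remains to see that a finitely supported function is a
difference exactly when it sums to zero over every orbit: modulo differences, a point mass at `s`
agrees with the one at `s + a`, so any function is congruent to one supported on chosen orbit
representatives, whose values there are the orbit sums.
-/

section OrbitSum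

variable {G : Type*} [AddGroup G] (M : Type*) [AddCommGroup M]

/-- The difference operator `m ↦ m - m(· + a)` on finitely supported functions; the translate
`m(· + a)` is encoded as the push-forward of `m` along `s ↦ s - a`. -/
noncomputable def shiftDiff (a : G) : (G →₀ M) →+ (G →₀ M) :=
  AddMonoidHom.id _ - Finsupp.mapDomain.addMonoidHom (· - a)

/-- The map sending `m` to the function of its sums over the orbits `t + ℤa`, an orbit being a
point of the quotient by `ℤa`. -/
noncomputable def orbitSum (a : G) : (G →₀ M) →+ (G ⧸ AddSubgroup.zmultiples a →₀ M) :=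
  Finsupp.mapDomain.addMonoidHom QuotientAddGroup.mk

variable {M}

theorem shiftDiff_apply (a : G) (m : G →₀ M) : shiftDiff M a m = m - m.mapDomain (· - a) := rfl

theorem orbitSum_apply (a : G) (m : G →₀ M) :
    orbitSum M a m = m.mapDomain QuotientAddGroup.mk := rfl

theorem mk_zmultiples_eq_iff (a s t : G) :
    (s : G ⧸ AddSubgroup.zmultiples a) = t ↔ ∃ i : ℤ, s = t + i • a := by
  rw [eq_comm, QuotientAddGroup.eq, AddSubgroup.mem_zmultiples_iff]
  simp only [eq_neg_add_iff_add_eq, eq_comm]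

theorem orbitSum_apply_mk (a : G) (m : G →₀ M) (t : G)
    [DecidablePred fun s => ∃ i : ℤ, s = t + i • a] :
    orbitSum M a m t = ∑ s ∈ m.support with ∃ i : ℤ, s = t + i • a, m s := by
  classical
  rw [orbitSum_apply, Finsupp.mapDomain_apply_eq_sum]
  simp only [mk_zmultiples_eq_iff]

theorem orbitSum_shiftDiff (a : G) (m : G →₀ M) : orbitSum M a (shiftDiff M a m) = 0 := by
  have mk_sub : (QuotientAddGroup.mk : G → G ⧸ AddSubgroup.zmultiples a) ∘ (· - a) =
      QuotientAddGroup.mk :=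
    funext fun s => (mk_zmultiples_eq_iff a _ s).mpr ⟨-1, by simp [sub_eq_add_neg]⟩
  rw [shiftDiff_apply, map_sub, orbitSum_apply, orbitSum_apply, ← Finsupp.mapDomain_comp, mk_sub,
    sub_self]

theorem periodic_mk_single (a : G) (x : M) :
    Function.Periodic
      (fun s => (Finsupp.single s x : (G →₀ M) ⧸ (shiftDiff M a).range)) a := fun s => by
  rw [QuotientAddGroup.eq_iff_sub_mem]
  exact ⟨Finsupp.single (s + a) x, by simp [shiftDiff_apply]⟩

theorem sub_mapDomain_mem_range_shiftDiff (a : G) {f : G → G}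
    (hf : ∀ s, (f s : G ⧸ AddSubgroup.zmultiples a) = s) (m : G →₀ M) :
    m - m.mapDomain f ∈ (shiftDiff M a).range := by
  induction m using Finsupp.induction_linear with
  | zero => simp
  | add m n hm hn =>
    rw [Finsupp.mapDomain_add, add_sub_add_comm]
    exact add_mem hm hn
  | single s x =>
    obtain ⟨i, hi⟩ := (mk_zmultiples_eq_iff a s (f s)).mp (hf s).symm
    rw [Finsupp.mapDomain_single, ← QuotientAddGroup.eq_iff_sub_mem]
    conv_lhs => rw [hi]
    exact (periodic_mk_single a x).zsmul i (f s)

theorem range_shiftDiff (a : G) : (shiftDiff M a).range = (orbitSum M a).ker := by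
  apply le_antisymm
  · rintro _ ⟨n, rfl⟩
    exact orbitSum_shiftDiff a n
  · intro m hm
    have h := sub_mapDomain_mem_range_shiftDiff a
      (f := Quotient.out ∘ QuotientAddGroup.mk (s := AddSubgroup.zmultiples a))
      (fun _ => QuotientAddGroup.out_eq' _) m
    rwa [Finsupp.mapDomain_comp, ← orbitSum_apply, AddMonoidHom.mem_ker.mp hm,
      Finsupp.mapDomain_zero, sub_zero] at h

theorem mem_range_shiftDiff_iff (a : G) (m : G →₀ M)
    [∀ t, DecidablePred fun s => ∃ i : ℤ, s = t + i • a] :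
    m ∈ (shiftDiff M a).range ↔
      ∀ t, ∑ s ∈ m.support with ∃ i : ℤ, s = t + i • a, m s = 0 := by
  rw [range_shiftDiff, AddMonoidHom.mem_ker, Finsupp.ext_iff, QuotientAddGroup.forall_mk]
  simp only [orbitSum_apply_mk, Finsupp.coe_zero, Pi.zero_apply]

end OrbitSum

section PolynomialDivisor

open Polynomial

variable {R : Type*} [CommRing R] [IsDomain R]

/-- The divisor of zeros of a polynomial: the function `R → ℤ` giving the multiplicity of each
root in `R`. It takes integer values because it is subtracted in `divisor`. -/
noncomputable def rootDivisor (p : R[X]) : R →₀ ℤ :=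
  (p.roots.map fun t => Finsupp.single t 1).sum

theorem rootDivisor_mul {p q : R[X]} (hp : p ≠ 0) (hq : q ≠ 0) :
    rootDivisor (p * q) = rootDivisor p + rootDivisor q := by
  simp only [rootDivisor, roots_mul (mul_ne_zero hp hq), Multiset.map_add, Multiset.sum_add]

theorem rootDivisor_X_sub_C (t : R) : rootDivisor (X - C t) = Finsupp.single t 1 := by
  simp [rootDivisor]

theorem rootDivisor_C (c : R) : rootDivisor (C c) = 0 := by
  simp [rootDivisor]

theorem roots_taylor (a : R) (p : R[X]) : (taylor a p).roots = p.roots.map (· - a) := by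
  simpa [taylor_apply] using p.roots_comp_C_mul_X_add_C 1 a isUnit_one

theorem rootDivisor_taylor (a : R) (p : R[X]) :
    rootDivisor (taylor a p) = (rootDivisor p).mapDomain (· - a) := by
  rw [rootDivisor, rootDivisor, ← Finsupp.mapDomain.addMonoidHom_apply, map_multiset_sum,
    roots_taylor]
  simp [Multiset.map_map]

end PolynomialDivisor

section Divisor

open RatFunc

variable {K : Type*} [Field K]

/-- The leading constant of a rational function: that of its numerator, the denominator being
monic. -/
noncomputable def leadingConst : RatFunc K →*₀ K where
  toFun r := r.num.leadingCoeff
  map_zero' := by simp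
  map_one' := by simp
  map_mul' r s := by
    simpa [(monic_denom _).leadingCoeff] using congrArg Polynomial.leadingCoeff (num_denom_mul r s)

theorem leadingConst_algebraMap (p : Polynomial K) :
    leadingConst (algebraMap _ (RatFunc K) p) = p.leadingCoeff := by
  simp [leadingConst]

/-- The divisor of a rational function: its order of vanishing at each point of `K`. Zeros and
poles outside `K` are not recorded, and the divisor of `0` is `0`. -/
noncomputable def divisor (r : RatFunc K) : K →₀ ℤ :=
  rootDivisor r.num - rootDivisor r.denom

theorem divisor_algebraMap (p : Polynomial K) :
    divisor (algebraMap _ (RatFunc K) p) = rootDivisor p := by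
  simp [divisor, rootDivisor]

theorem divisor_mul {r s : RatFunc K} (hr : r ≠ 0) (hs : s ≠ 0) :
    divisor (r * s) = divisor r + divisor s := by
  have hrs := mul_ne_zero hr hs
  have h := congrArg rootDivisor (num_denom_mul r s)
  rw [rootDivisor_mul (num_ne_zero hrs) (mul_ne_zero (denom_ne_zero r) (denom_ne_zero s)),
    rootDivisor_mul (denom_ne_zero r) (denom_ne_zero s),
    rootDivisor_mul (mul_ne_zero (num_ne_zero hr) (num_ne_zero hs)) (denom_ne_zero (r * s)),
    rootDivisor_mul (num_ne_zero hr) (num_ne_zero hs)] at h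
  rw [divisor, divisor, divisor, sub_add_sub_comm, sub_eq_sub_iff_add_eq_add, h]

theorem divisor_div {r s : RatFunc K} (hr : r ≠ 0) (hs : s ≠ 0) :
    divisor (r / s) = divisor r - divisor s := by
  rw [eq_sub_iff_add_eq, ← divisor_mul (div_ne_zero hr hs) hs, div_mul_cancel₀ r hs]

end Divisor

section LinearProd

open RatFunc

variable {K : Type*} [Field K]

/-- The rational function `∏ (X - t) ^ m t` with leading constant `1` and divisor `m`. -/
noncomputable def linearProd (m : K →₀ ℤ) : RatFunc K :=
  m.prod fun t n => (X - C t) ^ n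

theorem algebraMap_X_sub_C (t : K) :
    algebraMap (Polynomial K) (RatFunc K) (Polynomial.X - Polynomial.C t) = X - C t := by
  rw [map_sub, algebraMap_X, algebraMap_C]

theorem X_sub_C_ne_zero (t : K) : (X - C t : RatFunc K) ≠ 0 := by
  rw [← algebraMap_X_sub_C]
  exact algebraMap_ne_zero (Polynomial.X_sub_C_ne_zero t)

theorem linearProd_ne_zero (m : K →₀ ℤ) : linearProd m ≠ 0 :=
  Finset.prod_ne_zero_iff.mpr fun t _ => zpow_ne_zero _ (X_sub_C_ne_zero t)

theorem linearProd_single_one (t : K) : linearProd (Finsupp.single t 1) = X - C t := by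
  simp [linearProd]

theorem linearProd_add (m n : K →₀ ℤ) : linearProd (m + n) = linearProd m * linearProd n :=
  Finsupp.prod_add_index' (fun _ => zpow_zero _) fun t => zpow_add₀ (X_sub_C_ne_zero t)

theorem linearProd_sub (m n : K →₀ ℤ) : linearProd (m - n) = linearProd m / linearProd n := by
  rw [eq_div_iff (linearProd_ne_zero n), ← linearProd_add, sub_add_cancel]

theorem leadingConst_linearProd (m : K →₀ ℤ) : leadingConst (linearProd m) = 1 := by
  have leadingConst_X_sub_C (t : K) : leadingConst (X - C t : RatFunc K) = 1 := by
    rw [← algebraMap_X_sub_C, leadingConst_algebraMap, Polynomial.leadingCoeff_X_sub_C]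
  simp [linearProd, Finsupp.prod, leadingConst_X_sub_C]

theorem divisor_linearProd (m : K →₀ ℤ) : divisor (linearProd m) = m := by
  let divisorHom : (K →₀ ℤ) →+ (K →₀ ℤ) := AddMonoidHom.mk' (fun m => divisor (linearProd m))
    fun m n => by rw [linearProd_add, divisor_mul (linearProd_ne_zero m) (linearProd_ne_zero n)]
  suffices divisorHom = AddMonoidHom.id _ from DFunLike.congr_fun this m
  refine Finsupp.addHom_ext' fun t => AddMonoidHom.ext_int ?_
  change divisor (linearProd (Finsupp.single t 1)) = Finsupp.single t 1
  rw [linearProd_single_one, ← algebraMap_X_sub_C, divisor_algebraMap, rootDivisor_X_sub_C]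

theorem leadingConst_C_mul_linearProd (c : K) (m : K →₀ ℤ) :
    leadingConst (C c * linearProd m) = c := by
  rw [map_mul, leadingConst_linearProd, mul_one, ← algebraMap_C, leadingConst_algebraMap,
    Polynomial.leadingCoeff_C]

theorem divisor_C_mul_linearProd {c : K} (hc : c ≠ 0) (m : K →₀ ℤ) :
    divisor (C c * linearProd m) = m := by
  rw [divisor_mul ((map_ne_zero C).mpr hc) (linearProd_ne_zero m), divisor_linearProd,
    ← algebraMap_C, divisor_algebraMap, rootDivisor_C, zero_add]

end LinearProd

section Translation

open RatFunc

variable {K F : Type*} [Field K] [FunLike F (RatFunc K) (RatFunc K)]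
  [AlgHomClass F K (RatFunc K) (RatFunc K)] {a : K} {σ : F}

theorem translation_algebraMap (hσ : σ X = X + C a) (p : Polynomial K) :
    σ (algebraMap _ (RatFunc K) p) = algebraMap _ _ (Polynomial.taylor a p) := by
  have h : (AlgHomClass.toAlgHom σ).comp (IsScalarTower.toAlgHom K (Polynomial K) (RatFunc K)) =
      (IsScalarTower.toAlgHom K (Polynomial K) (RatFunc K)).comp (Polynomial.taylorAlgHom a) :=
    Polynomial.algHom_ext (by simp [hσ])
  exact DFunLike.congr_fun h p

theorem translation_eq_taylor_num_div_taylor_denom (hσ : σ X = X + C a) (r : RatFunc K) :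
    σ r = algebraMap _ _ (Polynomial.taylor a r.num) /
      algebraMap _ _ (Polynomial.taylor a r.denom) := by
  rw [← translation_algebraMap hσ, ← translation_algebraMap hσ, ← map_div₀, num_div_denom]

theorem leadingConst_translation (hσ : σ X = X + C a) (r : RatFunc K) :
    leadingConst (σ r) = leadingConst r := by
  conv_rhs => rw [← num_div_denom r]
  simp only [translation_eq_taylor_num_div_taylor_denom hσ, map_div₀, leadingConst_algebraMap,
    Polynomial.leadingCoeff_taylor]

theorem divisor_translation (hσ : σ X = X + C a) {r : RatFunc K} (hr : r ≠ 0) :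
    divisor (σ r) = (divisor r).mapDomain (· - a) := by
  have taylor_ne_zero {p : Polynomial K} (hp : p ≠ 0) :
      algebraMap _ (RatFunc K) (Polynomial.taylor a p) ≠ 0 :=
    algebraMap_ne_zero ((Polynomial.taylor_eq_zero a p).not.mpr hp)
  rw [translation_eq_taylor_num_div_taylor_denom hσ,
    divisor_div (taylor_ne_zero (num_ne_zero hr)) (taylor_ne_zero (denom_ne_zero r)),
    divisor_algebraMap, divisor_algebraMap, rootDivisor_taylor, rootDivisor_taylor,
    ← Finsupp.mapDomain_sub, divisor]

theorem translation_linearProd (hσ : σ X = X + C a) (m : K →₀ ℤ) :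
    σ (linearProd m) = linearProd (m.mapDomain (· - a)) := by
  have translation_X_sub_C (t : K) : σ (X - C t) = X - C (t - a) := by
    rw [← algebraMap_X_sub_C, translation_algebraMap hσ, map_sub, Polynomial.taylor_X,
      Polynomial.taylor_C, map_sub, map_add, map_sub, algebraMap_X, algebraMap_C, algebraMap_C]
    ring
  rw [linearProd, linearProd, Finsupp.prod_mapDomain_index (fun _ => zpow_zero _)
    fun t => zpow_add₀ (X_sub_C_ne_zero t)]
  simp only [Finsupp.prod, map_prod, map_zpow₀, translation_X_sub_C]

theorem leadingConst_div_translation (hσ : σ X = X + C a) {r : RatFunc K} (hr : r ≠ 0) :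
    leadingConst (r / σ r) = 1 := by
  rw [map_div₀, leadingConst_translation hσ]
  exact div_self ((map_ne_zero _).mpr hr)

theorem divisor_div_translation (hσ : σ X = X + C a) {r : RatFunc K} (hr : r ≠ 0) :
    divisor (r / σ r) = shiftDiff ℤ a (divisor r) := by
  rw [divisor_div hr ((map_ne_zero σ).mpr hr), divisor_translation hσ hr, shiftDiff_apply]

theorem linearProd_shiftDiff (hσ : σ X = X + C a) (m : K →₀ ℤ) :
    linearProd (shiftDiff ℤ a m) = linearProd m / σ (linearProd m) := by
  rw [shiftDiff_apply, linearProd_sub, translation_linearProd hσ]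

end Translation

theorem C_mul_linearProd_mem_Gsigma_iff {K : Type*} [Field K] {a : K}
    {σ : RatFunc K ≃ₐ[K] RatFunc K} (hσ : σ RatFunc.X = RatFunc.X + RatFunc.C a)
    (c : Kˣ) (m : K →₀ ℤ) :
    RatFunc.C (c : K) * linearProd m ∈ Gsigma σ.toRingEquiv ↔
      c = 1 ∧ m ∈ (shiftDiff ℤ a).range := by
  constructor
  · rintro ⟨r, hr, h : _ = r / σ r⟩
    have hlead := leadingConst_div_translation hσ hr
    have hdiv := divisor_div_translation hσ hr
    rw [← h, leadingConst_C_mul_linearProd] at hlead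
    rw [← h, divisor_C_mul_linearProd c.ne_zero] at hdiv
    exact ⟨Units.ext hlead, divisor r, hdiv.symm⟩
  · rintro ⟨rfl, n, rfl⟩
    refine ⟨linearProd n, linearProd_ne_zero n, ?_⟩
    rw [Units.val_one, map_one, one_mul]
    exact linearProd_shiftDiff hσ n

open Classical in
theorem stmt4_general {K : Type*} [Field K] (a : K)
    (σ : RatFunc K ≃ₐ[K] RatFunc K) (hσ : σ RatFunc.X = RatFunc.X + RatFunc.C a) :
    ∀ (c : Kˣ) (m : K →₀ ℤ),
      (RatFunc.C (c : K) * m.prod (fun t (n : ℤ) => (RatFunc.X - RatFunc.C t) ^ n))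
          ∈ Gsigma σ.toRingEquiv ↔
        (c = 1 ∧ ∀ t : K,
          (∑ s ∈ m.support.filter (fun s => ∃ i : ℤ, s = t + i • a), m s) = 0) := by
  intro c m
  rw [← mem_range_shiftDiff_iff]
  exact C_mul_linearProd_mem_Gsigma_iff hσ c m

open Classical in
/-- Let `L` be algebraically closed, `a ∈ Lˣ`, and `σ` the automorphism of `L(X)` fixing `L`
with `σ(X) = X + a`.  A nonzero `β ∈ L(X)`, written canonically as
`β = C c · ∏_t (X − t)^{m t}`, belongs to `G_σ` if and only if `c = 1` and
`m ∈ Fsfun_σ(L, ℤ)`, i.e. the sum of the values of `m` over each orbit `{t + i·a : i ∈ ℤ}`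
vanishes. -/
theorem stmt4 {L : Type*} [Field L] [IsAlgClosed L] (a : L) (ha : a ≠ 0)
    (σ : RatFunc L ≃ₐ[L] RatFunc L) (hσ : σ RatFunc.X = RatFunc.X + RatFunc.C a) :
    ∀ (c : Lˣ) (m : L →₀ ℤ),
      (RatFunc.C (c : L) * m.prod (fun t (n : ℤ) => (RatFunc.X - RatFunc.C t) ^ n))
          ∈ Gsigma σ.toRingEquiv ↔
        (c = 1 ∧ ∀ t : L,
          (∑ s ∈ m.support.filter (fun s => ∃ i : ℤ, s = t + i • a), m s) = 0) :=
  stmt4_general a σ hσ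
end

section
/- Let k be a field and σ a ring automorphism of k. For u, v ∈ kˣ, there exists a k-linear bijection φ : k → k satisfying φ ∘ T_u = T_v ∘ φ (equivalently, the modules N_u and N_v over the skew Laurent polynomial algebra k[x, x⁻¹, σ] are isomorphic) if and only if v ∈ G_σ · u, i.e. if and only if v/u = r/σ(r) for some nonzero r ∈ k. -/
/-!
Both `φ ∘ T_u` and `T_v ∘ φ` are `σ`-semilinear, so they agree as soon as they agree at `1`, where
their values are `u * φ 1` and `σ (φ 1) * v`. As `φ` runs over the linear automorphisms of a ring,
`φ 1` runs over its units.
-/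

theorem map_eq_mul_map_one {M F : Type*} [Monoid M] [FunLike F M M] [MulActionHomClass F M M M]
    (f : F) (a : M) : f a = a * f 1 := by
  rw [← smul_eq_mul, ← map_smul, smul_eq_mul, mul_one]

section Semiring

variable {R : Type*} [Semiring R]

/-- Right multiplication by `u` twisted by a ring endomorphism `σ`, as a `σ`-semilinear map. This is
the operator `T_u` through which `x` acts on the module `N_u`. -/
def twistedMulRight (σ : R →+* R) (u : R) : R →ₛₗ[σ] R :=
  (LinearMap.toSpanSingleton R R u).comp σ.toSemilinearMap

theorem twistedMulRight_apply (σ : R →+* R) (u b : R) : twistedMulRight σ u b = σ b * u :=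
  rfl

theorem comp_twistedMulRight_eq_iff (σ : R →+* R) (u v : R) (φ : R →ₗ[R] R) :
    φ.comp (twistedMulRight σ u) = (twistedMulRight σ v).comp φ ↔ u * φ 1 = σ (φ 1) * v := by
  have comp_apply_one : φ.comp (twistedMulRight σ u) 1 = u * φ 1 := by
    rw [LinearMap.comp_apply, twistedMulRight_apply, map_one, one_mul, map_eq_mul_map_one]
  rw [← comp_apply_one, ← twistedMulRight_apply, ← LinearMap.comp_apply]
  exact ⟨fun h ↦ LinearMap.congr_fun h 1, LinearMap.ext_ring⟩

theorem exists_linearEquiv_apply_one_eq_iff_isUnit (r : R) :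
    (∃ φ : R ≃ₗ[R] R, φ 1 = r) ↔ IsUnit r := by
  constructor
  · rintro ⟨φ, rfl⟩
    refine isUnit_iff_exists.mpr ⟨φ.symm 1, ?_, ?_⟩
    · rw [← map_eq_mul_map_one φ.symm, φ.symm_apply_apply]
    · rw [← map_eq_mul_map_one φ, φ.apply_symm_apply]
  · rintro ⟨r, rfl⟩
    exact ⟨r.mulRightLinearEquiv R, one_mul _⟩

theorem stmt6_general (σ : R →+* R) (u v : R) :
    (∃ φ : R ≃ₗ[R] R, ∀ b : R, φ (σ b * u) = σ (φ b) * v) ↔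
    (∃ r : R, IsUnit r ∧ u * r = σ r * v) := by
  have intertwines_iff (φ : R ≃ₗ[R] R) :
      (∀ b : R, φ (σ b * u) = σ (φ b) * v) ↔ u * φ 1 = σ (φ 1) * v :=
    LinearMap.ext_iff.symm.trans (comp_twistedMulRight_eq_iff σ u v φ)
  simp only [intertwines_iff, ← exists_linearEquiv_apply_one_eq_iff_isUnit]
  exact ⟨fun ⟨φ, h⟩ ↦ ⟨φ 1, ⟨φ, rfl⟩, h⟩, fun ⟨_, ⟨φ, rfl⟩, h⟩ ↦ ⟨φ, h⟩⟩

end Semiring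

theorem isUnit_and_mul_eq_map_mul_iff {G₀ F : Type*} [CommGroupWithZero G₀] [FunLike F G₀ G₀]
    [MonoidWithZeroHomClass F G₀ G₀] (σ : F) {u : G₀} (hu : u ≠ 0) (v r : G₀) :
    IsUnit r ∧ u * r = σ r * v ↔ r ≠ 0 ∧ v / u = r / σ r := by
  rw [isUnit_iff_ne_zero]
  refine and_congr_right fun hr ↦ ?_
  rw [div_eq_div_iff hu ((map_ne_zero σ).mpr hr), mul_comm v, mul_comm r, eq_comm]

/-- For a field `k` with ring automorphism `σ` and `u, v ∈ kˣ`, there is a `k`-linear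
bijection `φ : k → k` intertwining `T_u : b ↦ σ(b)·u` and `T_v : b ↦ σ(b)·v` (that is, the
one-dimensional modules `N_u` and `N_v` over `k[x, x⁻¹, σ]` are isomorphic) if and only if
`v/u = r/σ(r)` for some nonzero `r ∈ k`, i.e. `v ∈ G_σ · u`. -/
theorem stmt6 {k : Type*} [Field k] (σ : k ≃+* k) (u v : k) (hu : u ≠ 0) (hv : v ≠ 0) :
    (∃ φ : k ≃ₗ[k] k, ∀ b : k, φ (σ b * u) = σ (φ b) * v) ↔
    (∃ r : k, r ≠ 0 ∧ v / u = r / σ r) :=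
  (stmt6_general (σ : k →+* k) u v).trans <| exists_congr <|
    isUnit_and_mul_eq_map_mul_iff σ hu v
end

section
/- Let σ be the ℂ-algebra automorphism of ℂ(X) with σ(X) = X − 2, let θ ∈ ℂ, and let u ∈ ℂ(X) be nonzero. The ℂ-linear operators H, E_u, F_u on ℂ(X) defined by H(b) = X·b, E_u(b) = σ(b)·u, and F_u(b) = ((θ − (X+1)²)/4)·σ⁻¹(b)·σ⁻¹(u)⁻¹ satisfy the sl₂ relations H∘E_u − E_u∘H = 2E_u, H∘F_u − F_u∘H = −2F_u, E_u∘F_u − F_u∘E_u = H, and moreover the Casimir operator (H + 1)² + 4·F_u∘E_u equals θ times the identity operator. -/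
/-
The operator `e` is the automorphism `σ` followed by multiplication by `u`, and `f` is the inverse
of `e` followed by multiplication by `a = (θ - (x + 1) ^ 2) / 4`. Hence `f ∘ e` and `e ∘ f` are
multiplication by `a` and by `σ a`. Moving multiplication by `x` past `σ` or `σ⁻¹` shifts `x` by
`∓2`, which gives the relations with `h`; the last `sl₂`-relation and the value of the Casimir
operator become the identities `σ a - a = x` and `(x + 1) ^ 2 + 4 * a = θ`.
-/

open Algebra (lmul)

attribute [local instance] LieRing.ofAssociativeRing

section Operators

variable {k R : Type*} [CommRing k] [CommRing R] [Algebra k R] (σ : R ≃ₐ[k] R)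

/-- The operator by which the variable of the skew Laurent algebra `R[y, y⁻¹, σ]` acts on its
rank-one module with `y · 1 = u`. For `R = ℂ(X)` this is the operator `e` of the `sl₂`-module
`N_u`. -/
def raisingOp (u : R) : Module.End k R :=
  lmul k R u * σ.toLinearMap

/-- The operator by which `a y⁻¹` acts on the rank-one module with `y · 1 = u`. For `R = ℂ(X)` and
`a = (θ - (X + 1) ^ 2) / 4` this is the operator `f` of the `sl₂`-module `N_u`. The weight `u` is
taken to be a unit, so that `σ⁻¹(u)⁻¹` can be written as `σ⁻¹(u⁻¹)`. -/
def loweringOp (a : R) (u : Rˣ) : Module.End k R :=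
  lmul k R (a * σ.symm ↑u⁻¹) * σ.symm.toLinearMap

theorem lie_lmul_raisingOp (x u : R) :
    ⁅lmul k R x, raisingOp σ u⁆ = lmul k R (x - σ x) * raisingOp σ u := by
  ext b
  calc x * (u * σ b) - u * σ (x * b) = (x - σ x) * (u * σ b) := by rw [map_mul]; ring

theorem lie_lmul_loweringOp (x a : R) (u : Rˣ) :
    ⁅lmul k R x, loweringOp σ a u⁆ = lmul k R (x - σ.symm x) * loweringOp σ a u :=
  lie_lmul_raisingOp σ.symm x (a * σ.symm ↑u⁻¹)

theorem raisingOp_mul_loweringOp (a : R) (u : Rˣ) :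
    raisingOp σ u * loweringOp σ a u = lmul k R (σ a) := by
  ext b
  calc u * σ (a * σ.symm ↑u⁻¹ * σ.symm b) = σ a * b * (u * ↑u⁻¹) := by
        simp only [map_mul, AlgEquiv.apply_symm_apply]
        ring
    _ = σ a * b := by rw [Units.mul_inv, mul_one]

theorem loweringOp_mul_raisingOp (a : R) (u : Rˣ) :
    loweringOp σ a u * raisingOp σ u = lmul k R a := by
  ext b
  calc a * σ.symm ↑u⁻¹ * σ.symm (u * σ b) = a * b * σ.symm (u * ↑u⁻¹) := by
        simp only [map_mul, AlgEquiv.symm_apply_apply]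
        ring
    _ = a * b := by rw [Units.mul_inv, map_one, mul_one]

theorem lie_raisingOp_loweringOp (a : R) (u : Rˣ) :
    ⁅raisingOp σ u, loweringOp σ a u⁆ = lmul k R (σ a - a) := by
  rw [Ring.lie_def, raisingOp_mul_loweringOp, loweringOp_mul_raisingOp, map_sub]

variable {x a : R} {θ : k}

theorem casimir_raisingOp_loweringOp (ha : 4 * a = algebraMap k R θ - (x + 1) ^ 2) (u : Rˣ) :
    (lmul k R x + 1) ^ 2 + 4 * (loweringOp σ a u * raisingOp σ u) = θ • 1 :=
  calc (lmul k R x + 1) ^ 2 + 4 * (loweringOp σ a u * raisingOp σ u)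
      = lmul k R ((x + 1) ^ 2 + 4 * a) := by
        rw [loweringOp_mul_raisingOp]
        simp only [map_add, map_pow, map_mul, map_one, map_ofNat]
    _ = θ • 1 := by
        rw [ha, add_sub_cancel, AlgHom.commutes, Algebra.algebraMap_eq_smul_one]

variable {σ}

theorem isSl2Triple_raisingOp_loweringOp (hσ : σ x = x - 2) (ha : σ a - a = x) (hx : x ≠ 0)
    (u : Rˣ) : IsSl2Triple (lmul k R x) (raisingOp σ u) (loweringOp σ a u) where
  h_ne_zero := (map_ne_zero_iff _ Algebra.lmul_injective).mpr hx
  lie_e_f := by rw [lie_raisingOp_loweringOp, ha]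
  lie_h_e_nsmul := by
    rw [lie_lmul_raisingOp, hσ, sub_sub_cancel, map_ofNat, Nat.ofNat_nsmul_eq_mul]
  lie_h_f_nsmul := by
    have hσ_symm : σ.symm x = x + 2 := by
      rw [AlgEquiv.symm_apply_eq, map_add, hσ, map_ofNat, sub_add_cancel]
    rw [lie_lmul_loweringOp, hσ_symm, sub_add_cancel_left, map_neg, map_ofNat,
      Nat.ofNat_nsmul_eq_mul]
    exact neg_mul (2 : Module.End k R) _

theorem map_sub_self_eq_of_four_mul_eq (h2 : IsLeftRegular (2 : R)) (hσ : σ x = x - 2)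
    (ha : 4 * a = algebraMap k R θ - (x + 1) ^ 2) : σ a - a = x := by
  have hσa : 4 * σ a = algebraMap k R θ - (x - 2 + 1) ^ 2 := by
    simpa only [map_mul, map_sub, map_pow, map_add, map_one, map_ofNat, AlgEquiv.commutes, hσ]
      using congrArg σ ha
  have h4 : 2 * (2 * (σ a - a)) = 2 * (2 * x) := by linear_combination hσa - ha
  exact h2 (h2 h4)

theorem ne_zero_of_map_eq_sub_two [Nontrivial R] (h2 : IsLeftRegular (2 : R))
    (hσ : σ x = x - 2) : x ≠ 0 := by
  rintro rfl
  exact h2.ne_zero (by simpa using hσ)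

theorem stmt8_general (h2 : IsLeftRegular (2 : R)) (hσ : σ x = x - 2)
    (ha : 4 * a = algebraMap k R θ - (x + 1) ^ 2) (u : Rˣ)
    {H E F : R → R} (hH : ∀ b, H b = x * b) (hE : ∀ b, E b = σ b * u)
    (hF : ∀ b, F b = a * σ.symm b * σ.symm ↑u⁻¹) :
    (∀ b, H (E b) - E (H b) = 2 * E b) ∧
    (∀ b, H (F b) - F (H b) = -2 * F b) ∧
    (∀ b, E (F b) - F (E b) = H b) ∧
    (∀ b, H (H b) + 2 * H b + b + 4 * F (E b) = algebraMap k R θ * b) := by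
  nontriviality R
  have hsl := isSl2Triple_raisingOp_loweringOp hσ (map_sub_self_eq_of_four_mul_eq h2 hσ ha)
    (ne_zero_of_map_eq_sub_two h2 hσ) u
  have hcas := casimir_raisingOp_loweringOp σ ha u
  obtain rfl : H = lmul k R x := funext hH
  obtain rfl : E = raisingOp σ u := funext fun b => (hE b).trans (mul_comm _ _)
  obtain rfl : F = loweringOp σ a u := funext fun b => (hF b).trans (mul_right_comm _ _ _)
  refine ⟨fun b => ?_, fun b => ?_, fun b => ?_, fun b => ?_⟩
  · simpa [Ring.lie_def] using LinearMap.congr_fun hsl.lie_h_e_nsmul b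
  · simpa [Ring.lie_def] using LinearMap.congr_fun hsl.lie_h_f_nsmul b
  · exact LinearMap.congr_fun hsl.lie_e_f b
  · have hcas_b := LinearMap.congr_fun hcas b
    simp only [sq, Algebra.coe_lmul_eq_mul, LinearMap.mul_apply_apply, LinearMap.add_apply,
      LinearMap.smul_apply, Module.End.mul_apply, Module.End.one_apply, Module.End.ofNat_apply,
      Nat.ofNat_nsmul_eq_mul, ← Algebra.smul_def] at hcas_b ⊢
    linear_combination hcas_b

end Operators

/-- Let `σ` be the `ℂ`-algebra automorphism of `ℂ(X)` with `σ(X) = X - 2`, `θ ∈ ℂ` and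
`u ∈ ℂ(X)` nonzero.  The operators `H(b) = X·b`, `E_u(b) = σ(b)·u` and
`F_u(b) = ((θ − (X+1)²)/4)·σ⁻¹(b)·σ⁻¹(u)⁻¹` on `ℂ(X)` satisfy the `sl₂`-relations
`[H, E_u] = 2E_u`, `[H, F_u] = −2F_u`, `[E_u, F_u] = H`, and the Casimir operator
`(H+1)² + 4·F_u∘E_u` is `θ` times the identity. -/
theorem stmt8 (σ : RatFunc ℂ ≃ₐ[ℂ] RatFunc ℂ) (hσ : σ RatFunc.X = RatFunc.X - 2)
    (θ : ℂ) (u : RatFunc ℂ) (hu : u ≠ 0)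
    (H E F : RatFunc ℂ → RatFunc ℂ)
    (hH : ∀ b, H b = RatFunc.X * b)
    (hE : ∀ b, E b = σ b * u)
    (hF : ∀ b, F b = (RatFunc.C θ - (RatFunc.X + 1) ^ 2) / 4 * σ.symm b * (σ.symm u)⁻¹) :
    (∀ b, H (E b) - E (H b) = 2 * E b) ∧
    (∀ b, H (F b) - F (H b) = -2 * F b) ∧
    (∀ b, E (F b) - F (E b) = H b) ∧
    (∀ b, H (H b) + 2 * H b + b + 4 * F (E b) = RatFunc.C θ * b) := by
  exact stmt8_general (IsRegular.of_ne_zero two_ne_zero).left hσ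
    (a := (RatFunc.C θ - (RatFunc.X + 1) ^ 2) / 4) (mul_div_cancel₀ _ (by norm_num))
    (Units.mk0 u hu) hH hE (by simpa using hF)
end

section
/- Let θ ∈ ℂ, let r₁, r₂ be the two roots of θ − (X+1)², set ω := 3 + max(Re r₁, Re r₂) and ℂ_ω := {z ∈ ℂ : ω ≤ Re z < ω + 2}. Let c ∈ ℂˣ, let m : ℂ → ℤ be finitely supported with support contained in ℂ_ω, and set u := c·∏_{t ∈ ℂ_ω}(X − t)^{m(t)}. Then every nonzero ℂ-subspace V of ℂ(X) that is closed under multiplication by X and under the operators E_u and F_u contains all of ℂ[X]. (Equivalently, the monic generator f_u of the ideal L_u ∩ ℂ[X] of ℂ[X] equals 1, so ℂ[X] ⊆ L_u, where L_u is the simple socle of the U_θ-module N_u.) -/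
/-!
For a nonzero invariant space `V`, consider the set `Z` of common zeros of the polynomials in `V`.
If `p ∈ V` then clearing the denominator of `u` puts `p(X - d) * num u` in `V`, so `Z` is carried
into itself by `z ↦ z - d` away from the zeros of `u`, and likewise by `z ↦ z + d` away from the
zeros of the factor `v` of the backward operator. As `Z` is finite, both orbits of a point of `Z`
have to be stopped: the first at a zero `w` of `u`, the second at a zero of `v`, which then has the
form `w + n * d` with `n ≥ 0`. In the theorem this is impossible, because the zeros of `u` have real
part at least `ω` and those of `v` have real part less than `ω`. Hence `Z` is empty and `1 ∈ V`.
-/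

open Polynomial

section CommonZeros

variable {R : Type*} [CommRing R]

/-- The common zeros of the polynomials in an ideal of `R[X]`, that is, the zero locus of the ideal
on the affine line. -/
def commonZeros (I : Ideal R[X]) : Set R :=
  {z | ∀ p ∈ I, p.IsRoot z}

theorem finite_commonZeros [IsDomain R] {I : Ideal R[X]} (hI : I ≠ ⊥) :
    (commonZeros I).Finite := by
  obtain ⟨p, hp, hp0⟩ := (Submodule.ne_bot_iff I).1 hI
  exact (finite_setOfPred_isRoot hp0).subset fun z hz => hz p hp

theorem eq_top_of_commonZeros_eq_empty {K : Type*} [Field K] [IsAlgClosed K] {I : Ideal K[X]}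
    (hI : commonZeros I = ∅) : I = ⊤ := by
  obtain ⟨f, rfl⟩ := (IsPrincipalIdealRing.principal I).principal
  refine Ideal.span_singleton_eq_top.2 (isUnit_iff_degree_eq_zero.2 ?_)
  by_contra hdeg
  obtain ⟨z, hz⟩ := IsAlgClosed.exists_root f hdeg
  refine hI.subset (show z ∈ commonZeros _ from fun p hp => ?_)
  exact hz.dvd (Ideal.mem_span_singleton.1 hp)

end CommonZeros

variable {K : Type*} [Field K]

section ZeroSet

/-- The zeros of a rational function, read off from its numerator in lowest terms. Every point is a
zero of `0`. -/
def zeroSet (x : RatFunc K) : Set K :=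
  {z | x.num.IsRoot z}

theorem zeroSet_mul_subset (x y : RatFunc K) : zeroSet (x * y) ⊆ zeroSet x ∪ zeroSet y :=
  fun _ hz => root_mul.1 (IsRoot.dvd hz (RatFunc.num_mul_dvd x y))

theorem zeroSet_algebraMap (p : K[X]) :
    zeroSet (algebraMap K[X] (RatFunc K) p) = {z | p.IsRoot z} := by
  rw [zeroSet, RatFunc.num_algebraMap]

theorem zeroSet_C {c : K} (hc : c ≠ 0) : zeroSet (RatFunc.C c) = ∅ := by
  simp [zeroSet, hc]

theorem zeroSet_X_sub_C (t : K) : zeroSet (RatFunc.X - RatFunc.C t) = {t} := by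
  rw [← RatFunc.algebraMap_X, ← RatFunc.algebraMap_C, ← map_sub, zeroSet_algebraMap]
  ext z
  simp [sub_eq_zero]

theorem zeroSet_inv_algebraMap {p : K[X]} (hp : p ≠ 0) :
    zeroSet (algebraMap K[X] (RatFunc K) p)⁻¹ = ∅ := by
  have hdvd : (algebraMap K[X] (RatFunc K) p)⁻¹.num ∣ 1 := by
    simpa using RatFunc.num_div_dvd 1 hp
  exact Set.eq_empty_of_forall_notMem fun z hz => by simpa using IsRoot.dvd hz hdvd

theorem zeroSet_pow_subset (x : RatFunc K) (n : ℕ) : zeroSet (x ^ n) ⊆ zeroSet x := by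
  induction n with
  | zero => simp [zeroSet]
  | succ n ih =>
    rw [pow_succ]
    exact (zeroSet_mul_subset _ _).trans (Set.union_subset ih subset_rfl)

theorem zeroSet_X_sub_C_zpow_subset (t : K) (n : ℤ) :
    zeroSet ((RatFunc.X - RatFunc.C t) ^ n) ⊆ {t} := by
  cases n with
  | ofNat n =>
    rw [Int.ofNat_eq_natCast, zpow_natCast]
    exact (zeroSet_pow_subset _ n).trans (zeroSet_X_sub_C t).subset
  | negSucc n =>
    rw [zpow_negSucc, ← RatFunc.algebraMap_X, ← RatFunc.algebraMap_C, ← map_sub, ← map_pow,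
      zeroSet_inv_algebraMap (pow_ne_zero _ (X_sub_C_ne_zero t))]
    exact Set.empty_subset _

theorem zeroSet_prod_subset {ι : Type*} (s : Finset ι) (x : ι → RatFunc K) :
    zeroSet (∏ i ∈ s, x i) ⊆ ⋃ i ∈ s, zeroSet (x i) := by
  classical
  induction s using Finset.induction_on with
  | empty => simp [zeroSet]
  | insert i s hi ih =>
    rw [Finset.prod_insert hi, Finset.set_biUnion_insert]
    exact (zeroSet_mul_subset _ _).trans (Set.union_subset_union_right _ ih)

theorem zeroSet_C_mul_finsuppProd_subset {c : K} (hc : c ≠ 0) (m : K →₀ ℤ) :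
    zeroSet (RatFunc.C c * m.prod fun t n => (RatFunc.X - RatFunc.C t) ^ n) ⊆ m.support := by
  intro z hz
  rcases zeroSet_mul_subset _ _ hz with hz | hz
  · exact absurd hz (by simp [zeroSet_C hc])
  · obtain ⟨t, ht, hzt⟩ := Set.mem_iUnion₂.1 (zeroSet_prod_subset _ _ hz)
    rwa [zeroSet_X_sub_C_zpow_subset t _ hzt]

theorem zeroSet_inv_C_mul_finsuppProd_subset {c : K} (hc : c ≠ 0) (m : K →₀ ℤ) :
    zeroSet (RatFunc.C c * m.prod fun t n => (RatFunc.X - RatFunc.C t) ^ n)⁻¹ ⊆ m.support := by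
  have hinv : (RatFunc.C c * m.prod fun t n => (RatFunc.X - RatFunc.C t) ^ n)⁻¹ =
      RatFunc.C c⁻¹ * (-m).prod fun t n => (RatFunc.X - RatFunc.C t) ^ n := by
    rw [mul_inv, map_inv₀, Finsupp.prod_neg_index fun _ => zpow_zero _]
    simp only [Finsupp.prod, zpow_neg, Finset.prod_inv_distrib]
  rw [hinv, ← Finsupp.support_neg m]
  exact zeroSet_C_mul_finsuppProd_subset (inv_ne_zero hc) (-m)

end ZeroSet

section Shift

variable {φ : RatFunc K →ₐ[K] RatFunc K} {d : K}

theorem map_algebraMap_eq_taylor (hφ : φ RatFunc.X = RatFunc.X + RatFunc.C d) (p : K[X]) :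
    φ (algebraMap K[X] (RatFunc K) p) = algebraMap K[X] (RatFunc K) (taylor d p) := by
  have h : φ.comp (IsScalarTower.toAlgHom K K[X] (RatFunc K)) =
      (IsScalarTower.toAlgHom K K[X] (RatFunc K)).comp (taylorAlgHom d) :=
    algHom_ext (by simp [hφ])
  simpa using DFunLike.congr_fun h p

theorem add_mem_zeroSet_of_mem_zeroSet_map (hφ : φ RatFunc.X = RatFunc.X + RatFunc.C d)
    {x : RatFunc K} {z : K} (hz : z ∈ zeroSet (φ x)) : z + d ∈ zeroSet x := by
  have hx : φ x = algebraMap K[X] (RatFunc K) (taylor d x.num) /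
      algebraMap K[X] (RatFunc K) (taylor d x.denom) := by
    rw [← map_algebraMap_eq_taylor hφ, ← map_algebraMap_eq_taylor hφ, ← map_div₀,
      RatFunc.num_div_denom]
  have hdvd : (φ x).num ∣ taylor d x.num :=
    hx ▸ RatFunc.num_div_dvd _ (by simpa using x.denom_ne_zero)
  simpa [zeroSet, taylor_eval] using IsRoot.dvd hz hdvd

theorem zeroSet_mul_inv_map_subset (hφ : φ RatFunc.X = RatFunc.X + RatFunc.C d)
    (g u : RatFunc K) : zeroSet (g * (φ u)⁻¹) ⊆ zeroSet g ∪ (· + d) ⁻¹' zeroSet u⁻¹ := by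
  rw [← map_inv₀]
  exact (zeroSet_mul_subset _ _).trans
    (Set.union_subset_union_right _ fun _ => add_mem_zeroSet_of_mem_zeroSet_map hφ)

theorem symm_X_eq_add {σ : RatFunc K ≃ₐ[K] RatFunc K}
    (hσ : σ RatFunc.X = RatFunc.X - RatFunc.C d) :
    σ.symm RatFunc.X = RatFunc.X + RatFunc.C d := by
  rw [AlgEquiv.symm_apply_eq, map_add, hσ, ← RatFunc.algebraMap_eq_C, σ.commutes, sub_add_cancel]

end Shift

section PolynomialPart

/-- The ideal `V ∩ K[X]` of the polynomials contained in a `K[X]`-submodule `V` of `K(X)`. -/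
noncomputable def polynomialPart (V : Submodule K[X] (RatFunc K)) : Ideal K[X] :=
  V.comap (Algebra.linearMap K[X] (RatFunc K))

variable {V : Submodule K[X] (RatFunc K)}

theorem mem_polynomialPart {p : K[X]} :
    p ∈ polynomialPart V ↔ algebraMap K[X] (RatFunc K) p ∈ V :=
  Iff.rfl

theorem num_mul_mem_polynomialPart {p : K[X]} {x : RatFunc K}
    (h : algebraMap K[X] (RatFunc K) p * x ∈ V) : p * x.num ∈ polynomialPart V := by
  have hx : algebraMap K[X] (RatFunc K) x.num = algebraMap K[X] (RatFunc K) x.denom * x :=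
    ((div_eq_iff (RatFunc.algebraMap_ne_zero x.denom_ne_zero)).1 x.num_div_denom).trans
      (mul_comm _ _)
  rw [mem_polynomialPart, map_mul, hx, mul_left_comm, ← Algebra.smul_def]
  exact V.smul_mem _ h

theorem polynomialPart_ne_bot (hV : V ≠ ⊥) : polynomialPart V ≠ ⊥ := by
  obtain ⟨b, hb, hb0⟩ := V.ne_bot_iff.1 hV
  refine (Submodule.ne_bot_iff _).2 ⟨b.num, ?_, RatFunc.num_ne_zero hb0⟩
  simpa using num_mul_mem_polynomialPart (p := 1) (by simpa using hb)

variable {φ : RatFunc K →ₐ[K] RatFunc K} {d : K} {u : RatFunc K}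

theorem add_mem_commonZeros (hφ : φ RatFunc.X = RatFunc.X + RatFunc.C d)
    (hV : ∀ b ∈ V, φ b * u ∈ V) {z : K} (hz : z ∈ commonZeros (polynomialPart V))
    (hzu : z ∉ zeroSet u) : z + d ∈ commonZeros (polynomialPart V) := by
  intro p hp
  have hmem : taylor d p * u.num ∈ polynomialPart V :=
    num_mul_mem_polynomialPart (map_algebraMap_eq_taylor hφ p ▸ hV _ hp)
  have hroot : (taylor d p).IsRoot z := (root_mul.1 (hz _ hmem)).resolve_right hzu
  rwa [IsRoot.def, taylor_eval] at hroot

theorem exists_add_natCast_mul_mem_zeroSet [CharZero K] (hd : d ≠ 0)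
    (hφ : φ RatFunc.X = RatFunc.X + RatFunc.C d) (hV : V ≠ ⊥) (hVφ : ∀ b ∈ V, φ b * u ∈ V)
    {z : K} (hz : z ∈ commonZeros (polynomialPart V)) : ∃ n : ℕ, z + n * d ∈ zeroSet u := by
  by_contra! hzu
  have horbit (n : ℕ) : z + n * d ∈ commonZeros (polynomialPart V) := by
    induction n with
    | zero => simpa using hz
    | succ n ih =>
      have := add_mem_commonZeros hφ hVφ ih (hzu n)
      rwa [add_assoc, ← add_one_mul, ← Nat.cast_succ] at this
  have hinj : Function.Injective fun n : ℕ => z + n * d := fun a b hab => by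
    simpa [hd] using hab
  exact Set.infinite_of_injective_forall_mem hinj horbit
    (finite_commonZeros (polynomialPart_ne_bot hV))

end PolynomialPart

theorem smul_mem_of_X_smul_mem {R M : Type*} [CommSemiring R] [AddCommMonoid M] [Module R M]
    [Module R[X] M] [IsScalarTower R R[X] M] {V : Submodule R M}
    (hVX : ∀ b ∈ V, (X : R[X]) • b ∈ V) (p : R[X]) {b : M} (hb : b ∈ V) : p • b ∈ V := by
  induction p using Polynomial.induction_on with
  | C a => rw [← algebraMap_eq, algebraMap_smul]; exact V.smul_mem a hb
  | add p q hp hq => rw [add_smul]; exact V.add_mem hp hq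
  | monomial n a h =>
    rw [pow_succ', mul_left_comm, mul_smul]
    exact hVX _ h

theorem stmt9_general [IsAlgClosed K] [CharZero K] (σ : RatFunc K ≃ₐ[K] RatFunc K) {d : K}
    (hd : d ≠ 0) (hσ : σ RatFunc.X = RatFunc.X - RatFunc.C d) {u v : RatFunc K}
    (huv : ∀ w ∈ zeroSet u, ∀ n : ℕ, w + n * d ∉ zeroSet v)
    (V : Submodule K (RatFunc K)) (hV : V ≠ ⊥) (hVX : ∀ b ∈ V, RatFunc.X * b ∈ V)
    (hVE : ∀ b ∈ V, σ b * u ∈ V) (hVF : ∀ b ∈ V, σ.symm b * v ∈ V) (p : K[X]) :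
    algebraMap K[X] (RatFunc K) p ∈ V := by
  have hVX' : ∀ b ∈ V, (X : K[X]) • b ∈ V := by
    simpa only [Algebra.smul_def, RatFunc.algebraMap_X] using hVX
  let W : Submodule K[X] (RatFunc K) :=
    { V with smul_mem' := fun q _ hb => smul_mem_of_X_smul_mem hVX' q hb }
  have hW : W ≠ ⊥ := by
    obtain ⟨b, hb, hb0⟩ := V.ne_bot_iff.1 hV
    exact W.ne_bot_iff.2 ⟨b, hb, hb0⟩
  suffices h : polynomialPart W = ⊤ from mem_polynomialPart (V := W).1 (h ▸ Submodule.mem_top)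
  refine eq_top_of_commonZeros_eq_empty (Set.eq_empty_of_forall_notMem fun z hz => ?_)
  have hσ' : σ RatFunc.X = RatFunc.X + RatFunc.C (-d) := by rw [hσ, map_neg, sub_eq_add_neg]
  obtain ⟨n, hn⟩ : ∃ n : ℕ, z + n * -d ∈ zeroSet u :=
    exists_add_natCast_mul_mem_zeroSet (φ := σ) (neg_ne_zero.2 hd) hσ' hW hVE hz
  obtain ⟨k, hk⟩ : ∃ k : ℕ, z + k * d ∈ zeroSet v :=
    exists_add_natCast_mul_mem_zeroSet (φ := σ.symm) hd (symm_X_eq_add hσ) hW hVF hz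
  refine huv _ hn (n + k) ?_
  convert hk using 1
  push_cast
  ring

section HalfPlanes

theorem zeroSet_quadratic_div_four_subset {θ r₁ r₂ : ℂ}
    (hr : RatFunc.C θ - (RatFunc.X + 1) ^ 2 =
      -((RatFunc.X - RatFunc.C r₁) * (RatFunc.X - RatFunc.C r₂))) :
    zeroSet ((RatFunc.C θ - (RatFunc.X + 1) ^ 2) / 4) ⊆ {r₁, r₂} := by
  have hfactor : (RatFunc.C θ - (RatFunc.X + 1) ^ 2) / 4 =
      RatFunc.C (-4⁻¹) * ((RatFunc.X - RatFunc.C r₁) * (RatFunc.X - RatFunc.C r₂)) := by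
    rw [hr, map_neg, map_inv₀, map_ofNat]
    ring
  rw [hfactor]
  refine (zeroSet_mul_subset _ _).trans ?_
  rw [zeroSet_C (by norm_num), Set.empty_union]
  refine (zeroSet_mul_subset _ _).trans ?_
  rw [zeroSet_X_sub_C, zeroSet_X_sub_C, Set.singleton_union]

variable {σ : RatFunc ℂ ≃ₐ[ℂ] RatFunc ℂ} {θ r₁ r₂ : ℂ} {ω : ℝ} {u : RatFunc ℂ}

theorem re_lt_of_mem_zeroSet_mul_inv_symm (hσ : σ RatFunc.X = RatFunc.X - RatFunc.C 2)
    (hr : RatFunc.C θ - (RatFunc.X + 1) ^ 2 =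
      -((RatFunc.X - RatFunc.C r₁) * (RatFunc.X - RatFunc.C r₂)))
    (hω : max r₁.re r₂.re < ω) (hu : ∀ t ∈ zeroSet u⁻¹, t.re < ω + 2)
    {z : ℂ} (hz : z ∈ zeroSet ((RatFunc.C θ - (RatFunc.X + 1) ^ 2) / 4 * (σ.symm u)⁻¹)) :
    z.re < ω := by
  obtain ⟨hr₁, hr₂⟩ := max_lt_iff.1 hω
  have hsubset := zeroSet_mul_inv_map_subset (φ := σ.symm) (symm_X_eq_add hσ)
    ((RatFunc.C θ - (RatFunc.X + 1) ^ 2) / 4) u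
  rcases hsubset hz with hz | hz
  · rcases zeroSet_quadratic_div_four_subset hr hz with rfl | rfl <;> assumption
  · simpa using hu _ hz

theorem add_natCast_mul_two_notMem_zeroSet (hσ : σ RatFunc.X = RatFunc.X - RatFunc.C 2)
    (hr : RatFunc.C θ - (RatFunc.X + 1) ^ 2 =
      -((RatFunc.X - RatFunc.C r₁) * (RatFunc.X - RatFunc.C r₂)))
    (hω : max r₁.re r₂.re < ω) (hu : ∀ t ∈ zeroSet u, ω ≤ t.re)
    (hu' : ∀ t ∈ zeroSet u⁻¹, t.re < ω + 2) (w : ℂ) (hw : w ∈ zeroSet u) (n : ℕ) :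
    w + n * 2 ∉ zeroSet ((RatFunc.C θ - (RatFunc.X + 1) ^ 2) / 4 * (σ.symm u)⁻¹) := fun hv => by
  have hlt : w.re + n * 2 < ω := by
    simpa using re_lt_of_mem_zeroSet_mul_inv_symm hσ hr hω hu' hv
  linarith [hu w hw, n.cast_nonneg (α := ℝ)]

end HalfPlanes

/-- Let `θ ∈ ℂ`, let `r₁, r₂` be the two roots of `θ − (X+1)²`, let
`ω := 3 + max (Re r₁) (Re r₂)` and `ℂ_ω := {z : ω ≤ Re z < ω + 2}`.  Let
`u = c·∏_{t ∈ ℂ_ω}(X − t)^{m t}` with `c ≠ 0` and `m` finitely supported with support in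
`ℂ_ω`.  Then every nonzero `ℂ`-subspace `V` of `ℂ(X)` closed under multiplication by `X`
and under the operators `E_u(b) = σ(b)·u` and
`F_u(b) = ((θ − (X+1)²)/4)·σ⁻¹(b)·σ⁻¹(u)⁻¹` contains all of `ℂ[X]`. -/
theorem stmt9 (σ : RatFunc ℂ ≃ₐ[ℂ] RatFunc ℂ) (hσ : σ RatFunc.X = RatFunc.X - 2)
    (θ r₁ r₂ : ℂ)
    (hr : RatFunc.C θ - (RatFunc.X + 1) ^ 2 =
      -((RatFunc.X - RatFunc.C r₁) * (RatFunc.X - RatFunc.C r₂)))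
    (ω : ℝ) (hω : ω = 3 + max r₁.re r₂.re)
    (c : ℂ) (hc : c ≠ 0) (m : ℂ →₀ ℤ)
    (hm : ∀ s ∈ m.support, ω ≤ s.re ∧ s.re < ω + 2)
    (u : RatFunc ℂ)
    (hu : u = RatFunc.C c * m.prod (fun t (n : ℤ) => (RatFunc.X - RatFunc.C t) ^ n))
    (V : Submodule ℂ (RatFunc ℂ)) (hV : V ≠ ⊥)
    (hVX : ∀ b ∈ V, RatFunc.X * b ∈ V)
    (hVE : ∀ b ∈ V, σ b * u ∈ V)
    (hVF : ∀ b ∈ V,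
      (RatFunc.C θ - (RatFunc.X + 1) ^ 2) / 4 * σ.symm b * (σ.symm u)⁻¹ ∈ V) :
    ∀ p : Polynomial ℂ, algebraMap (Polynomial ℂ) (RatFunc ℂ) p ∈ V := by
  subst hu
  have hσ₂ : σ RatFunc.X = RatFunc.X - RatFunc.C 2 := by rw [hσ, map_ofNat]
  have huv := add_natCast_mul_two_notMem_zeroSet hσ₂ hr (by linarith)
    (fun t ht => (hm t (zeroSet_C_mul_finsuppProd_subset hc m ht)).1)
    (fun t ht => (hm t (zeroSet_inv_C_mul_finsuppProd_subset hc m ht)).2)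
  exact stmt9_general σ two_ne_zero hσ₂ huv V hV hVX hVE
    fun b hb => by simpa only [mul_assoc, mul_left_comm] using hVF b hb
end

section
/- Let θ ∈ ℂ with roots r₁, r₂ of θ − (X+1)², ω := 3 + max(Re r₁, Re r₂), c ∈ ℂˣ, m : ℂ → ℤ finitely supported with support in ℂ_ω, and u := c·∏_{t ∈ ℂ_ω}(X − t)^{m(t)}. Then the subspace K_u of ℂ(X) is invariant under multiplication by X and under E_u and F_u, and every nonzero ℂ-subspace of ℂ(X) invariant under these operators contains K_u; in particular K_u is the unique simple submodule of ℂ(X) for this sl₂-action, i.e. K_u = L_u. -/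
noncomputable section

open Classical in
/-- The number of indices `j ∈ {1, 2}` with `r_j ∈ {s − 4, s − 6, …, s − 2i}`. -/
def rootCount (r₁ r₂ s : ℂ) (i : ℕ) : ℤ :=
  (if ∃ l : ℕ, 2 ≤ l ∧ l ≤ i ∧ r₁ = s - 2 * (l : ℂ) then 1 else 0) +
  (if ∃ l : ℕ, 2 ≤ l ∧ l ≤ i ∧ r₂ = s - 2 * (l : ℂ) then 1 else 0)

/-- The spanning set of the subspace `K_u` of `ℂ(X)`:  (i) `ℂ[X]`;
(ii) `1/(X − s − 2i)^k` for `s` with `m s < 0`, `i ≥ 0`, `1 ≤ k ≤ −m s`;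
(iii) `1/(X − s + 2i)^k` for `s` with `m s > 0`, `i > 0`,
`1 ≤ k ≤ m s − #{j ∈ {1,2} : r_j ∈ {s−4, …, s−2i}}`. -/
def Kgen (r₁ r₂ : ℂ) (m : ℂ →₀ ℤ) : Set (RatFunc ℂ) :=
  {x | ∃ p : Polynomial ℂ, x = algebraMap (Polynomial ℂ) (RatFunc ℂ) p} ∪
  {x | ∃ s : ℂ, m s < 0 ∧ ∃ i k : ℕ, 1 ≤ k ∧ (k : ℤ) ≤ -m s ∧
    x = ((RatFunc.X - RatFunc.C (s + 2 * (i : ℂ))) ^ k)⁻¹} ∪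
  {x | ∃ s : ℂ, 0 < m s ∧ ∃ i k : ℕ, 0 < i ∧ 1 ≤ k ∧
    (k : ℤ) ≤ m s - rootCount r₁ r₂ s i ∧
    x = ((RatFunc.X - RatFunc.C (s - 2 * (i : ℂ))) ^ k)⁻¹}

/-!
Follow the orders of vanishing. Along a progression `z + 2ℤ`, the operator `E` moves the order
function of `b` one step up and adds that of `u`, while `F` moves it one step down and adds that of
`w = (θ - (X + 1)²) / 4 * (σ⁻¹ u)⁻¹`. A nonzero `b` has order `0` far away in both directions, so
whichever `b` one starts from, iterating `E` leads to the order `S z = ∑_{n ≥ 0} ord_{z - 2n} u` at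
`z`, and iterating `F` leads to `T z = ∑_{n ≥ 0} ord_{z + 2n} w`. An `X`-stable subspace containing
at each `z` an element of order at most `min (S z) (T z)` contains every `b` with
`min (S z) (T z) ≤ ord_z b` for all `z`, because for such `b` the polynomials `p` with `p b` in the
subspace form an ideal without common zeros. Conversely these `b` form a stable subspace, since
`σ⁻¹(u) w` has no poles. When the support of `m` meets every class modulo `2ℤ` at most once and the
roots lie far enough below it, `-min (S z) (T z)` is the bound on the pole order at `z` in `Kgen`.
-/

section OrdAt

open Polynomial

variable {K : Type*} [Field K]

/-- The order of vanishing at `z`, negative at a pole; its value at the zero function is `0`. -/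
def ordAt (z : K) (b : RatFunc K) : ℤ :=
  b.num.rootMultiplicity z - b.denom.rootMultiplicity z

lemma ordAt_algebraMap (z : K) (p : K[X]) :
    ordAt z (algebraMap K[X] (RatFunc K) p) = p.rootMultiplicity z := by
  simp [ordAt]

lemma ordAt_C (z c : K) : ordAt z (RatFunc.C c) = 0 := by
  simp [ordAt]

lemma ordAt_zero (z : K) : ordAt z (0 : RatFunc K) = 0 := by
  simpa using ordAt_C z 0

lemma ordAt_one (z : K) : ordAt z (1 : RatFunc K) = 0 := by
  simpa using ordAt_C z 1

lemma ordAt_eq_of_num_mul_eq (z : K) {b : RatFunc K} {p q : K[X]} (hb : b ≠ 0) (hp : p ≠ 0)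
    (hq : q ≠ 0) (h : b.num * q = p * b.denom) :
    ordAt z b = p.rootMultiplicity z - q.rootMultiplicity z := by
  have hmul := congrArg (rootMultiplicity z) h
  rw [rootMultiplicity_mul (mul_ne_zero (RatFunc.num_ne_zero hb) hq),
    rootMultiplicity_mul (mul_ne_zero hp b.denom_ne_zero)] at hmul
  rw [ordAt]
  omega

lemma ordAt_div_algebraMap (z : K) {p q : K[X]} (hp : p ≠ 0) (hq : q ≠ 0) :
    ordAt z (algebraMap K[X] (RatFunc K) p / algebraMap K[X] (RatFunc K) q) =
      p.rootMultiplicity z - q.rootMultiplicity z :=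
  ordAt_eq_of_num_mul_eq z
    (div_ne_zero (RatFunc.algebraMap_ne_zero hp) (RatFunc.algebraMap_ne_zero hq)) hp hq
    ((RatFunc.num_mul_eq_mul_denom_iff hq).mpr rfl)

lemma ordAt_mul (z : K) {b c : RatFunc K} (hb : b ≠ 0) (hc : c ≠ 0) :
    ordAt z (b * c) = ordAt z b + ordAt z c := by
  have hnum := mul_ne_zero (RatFunc.num_ne_zero hb) (RatFunc.num_ne_zero hc)
  have hdenom := mul_ne_zero b.denom_ne_zero c.denom_ne_zero
  rw [ordAt_eq_of_num_mul_eq z (mul_ne_zero hb hc) hnum hdenom (RatFunc.num_denom_mul b c),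
    rootMultiplicity_mul hnum, rootMultiplicity_mul hdenom, ordAt, ordAt]
  push_cast
  ring

lemma ordAt_inv (z : K) (b : RatFunc K) : ordAt z b⁻¹ = -ordAt z b := by
  rcases eq_or_ne b 0 with rfl | hb
  · rw [inv_zero, ordAt_zero, neg_zero]
  · have hmul := ordAt_mul z hb (inv_ne_zero hb)
    rw [mul_inv_cancel₀ hb, ordAt_one] at hmul
    omega

lemma ordAt_X_sub_C (z r : K) : ordAt z (RatFunc.X - RatFunc.C r) = Finsupp.single r 1 z := by
  classical
  have h := ordAt_algebraMap z (X - C r)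
  rw [map_sub, RatFunc.algebraMap_X, RatFunc.algebraMap_C, rootMultiplicity_X_sub_C] at h
  rw [h, Finsupp.single_apply]
  simp [eq_comm]

lemma ratFunc_X_sub_C_ne_zero (z : K) : (RatFunc.X - RatFunc.C z : RatFunc K) ≠ 0 := by
  simpa using RatFunc.algebraMap_ne_zero (Polynomial.X_sub_C_ne_zero z)

lemma ordAt_zpow (z : K) {b : RatFunc K} (hb : b ≠ 0) (n : ℤ) :
    ordAt z (b ^ n) = n * ordAt z b := by
  induction n with
  | zero => simp [ordAt_one]
  | succ n ih => rw [zpow_add_one₀ hb, ordAt_mul z (zpow_ne_zero _ hb) hb, ih]; ring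
  | pred n ih =>
    rw [zpow_sub_one₀ hb, ordAt_mul z (zpow_ne_zero _ hb) (inv_ne_zero hb), ih, ordAt_inv]; ring

lemma ordAt_prod (z : K) {ι : Type*} (s : Finset ι) (b : ι → RatFunc K) (hb : ∀ i ∈ s, b i ≠ 0) :
    ordAt z (∏ i ∈ s, b i) = ∑ i ∈ s, ordAt z (b i) := by
  classical
  induction s using Finset.induction_on with
  | empty => simp [ordAt_one]
  | insert i s hi ih =>
    rw [Finset.forall_mem_insert] at hb
    rw [Finset.prod_insert hi, Finset.sum_insert hi,
      ordAt_mul z hb.1 (Finset.prod_ne_zero_iff.mpr hb.2), ih hb.2]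

lemma min_ordAt_le_ordAt_add (z : K) {b c : RatFunc K} (hb : b ≠ 0) (hc : c ≠ 0)
    (hbc : b + c ≠ 0) : min (ordAt z b) (ordAt z c) ≤ ordAt z (b + c) := by
  have hbd := b.denom_ne_zero
  have hcd := c.denom_ne_zero
  have hn := RatFunc.num_mul_denom_add_denom_mul_num_ne_zero hbc
  have hroot := rootMultiplicity_add (a := z) hn
  rw [rootMultiplicity_mul (mul_ne_zero (RatFunc.num_ne_zero hb) hcd),
    rootMultiplicity_mul (mul_ne_zero hbd (RatFunc.num_ne_zero hc))] at hroot
  rw [ordAt_eq_of_num_mul_eq z hbc hn (mul_ne_zero hbd hcd) (RatFunc.num_denom_add b c),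
    rootMultiplicity_mul (mul_ne_zero hbd hcd), ordAt, ordAt]
  omega

lemma hasFiniteSupport_ordAt (b : RatFunc K) : (fun z => ordAt z b).HasFiniteSupport := by
  classical
  have hroots (p : K[X]) : (fun z => (p.rootMultiplicity z : ℤ)).HasFiniteSupport := by
    simp only [← count_roots]
    exact p.roots.hasFiniteSupport_count.fun_comp (by simp)
  exact (hroots b.num).sub (hroots b.denom)

lemma map_algebraMap_of_map_X (τ : RatFunc K ≃ₐ[K] RatFunc K) {a : K}
    (hτ : τ RatFunc.X = RatFunc.X - RatFunc.C a) (p : K[X]) :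
    τ (algebraMap K[X] (RatFunc K) p) = algebraMap K[X] (RatFunc K) (p.comp (X - C a)) := by
  rw [← RatFunc.aeval_X_left_eq_algebraMap, ← RatFunc.aeval_X_left_eq_algebraMap, aeval_comp,
    ← aeval_algHom_apply, hτ]
  simp

lemma ordAt_map (τ : RatFunc K ≃ₐ[K] RatFunc K) {a : K}
    (hτ : τ RatFunc.X = RatFunc.X - RatFunc.C a) (z : K) (b : RatFunc K) :
    ordAt z (τ b) = ordAt (z - a) b := by
  have hcomp (p : K[X]) : (p.comp (X - C a)).rootMultiplicity z = p.rootMultiplicity (z - a) := by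
    simpa [sub_eq_add_neg] using rootMultiplicity_comp_C_mul_X_add_C p 1 (-a) z isUnit_one
  rcases eq_or_ne b 0 with rfl | hb
  · rw [map_zero, ordAt_zero, ordAt_zero]
  have hcomp0 {p : K[X]} (hp : p ≠ 0) : p.comp (X - C a) ≠ 0 := by
    rw [sub_eq_add_neg, ← C_neg]
    exact comp_X_add_C_ne_zero_iff.mpr hp
  rw [← b.num_div_denom, map_div₀, map_algebraMap_of_map_X τ hτ, map_algebraMap_of_map_X τ hτ,
    ordAt_div_algebraMap z (hcomp0 (RatFunc.num_ne_zero hb)) (hcomp0 b.denom_ne_zero), hcomp, hcomp,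
    b.num_div_denom, ordAt]

lemma symm_map_X (τ : RatFunc K ≃ₐ[K] RatFunc K) {a : K}
    (hτ : τ RatFunc.X = RatFunc.X - RatFunc.C a) :
    τ.symm RatFunc.X = RatFunc.X - RatFunc.C (-a) := by
  have hC : τ (RatFunc.C a) = RatFunc.C a := by
    simpa only [RatFunc.algebraMap_eq_C] using τ.commutes a
  rw [AlgEquiv.symm_apply_eq, map_neg, sub_neg_eq_add, map_add, hτ, hC, sub_add_cancel]

lemma ordAt_smul (z : K) {r : K} (hr : r ≠ 0) {b : RatFunc K} (hb : b ≠ 0) :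
    ordAt z (r • b) = ordAt z b := by
  rw [RatFunc.smul_eq_C_mul, ordAt_mul z (by simpa using hr) hb, ordAt_C, zero_add]

/-- The space `{b | ∀ z, e z ≤ ord_z b}` of rational functions with prescribed zeros and poles,
as in the Riemann–Roch theorem, except that `e` may have infinite support. The guard `b ≠ 0` lets
`0` in, whose order is the junk value `0`. -/
def ordGE (e : K → ℤ) : Submodule K (RatFunc K) where
  carrier := {b | b ≠ 0 → ∀ z, e z ≤ ordAt z b}
  zero_mem' h := absurd rfl h
  add_mem' {b c} hb hc hbc z := by
    rcases eq_or_ne b 0 with rfl | hb0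
    · rw [zero_add] at hbc ⊢
      exact hc hbc z
    rcases eq_or_ne c 0 with rfl | hc0
    · rw [add_zero]
      exact hb hb0 z
    exact (le_min (hb hb0 z) (hc hc0 z)).trans (min_ordAt_le_ordAt_add z hb0 hc0 hbc)
  smul_mem' r b hb hrb z := by
    obtain ⟨hr, hb0⟩ := smul_ne_zero_iff.mp hrb
    rw [ordAt_smul z hr hb0]
    exact hb hb0 z

lemma ordGE_anti {d e : K → ℤ} (h : d ≤ e) : ordGE e ≤ ordGE d :=
  fun _ hb hb0 z => (h z).trans (hb hb0 z)

lemma mul_mem_ordGE {d e : K → ℤ} {b c : RatFunc K} (hb : b ∈ ordGE d) (hc : c ∈ ordGE e) :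
    b * c ∈ ordGE (d + e) := by
  intro hbc z
  obtain ⟨hb0, hc0⟩ := mul_ne_zero_iff.mp hbc
  rw [ordAt_mul z hb0 hc0]
  exact add_le_add (hb hb0 z) (hc hc0 z)

lemma algebraMap_mem_ordGE_zero (p : K[X]) : algebraMap K[X] (RatFunc K) p ∈ ordGE (0 : K → ℤ) :=
  fun _ z => (ordAt_algebraMap z p).symm ▸ Int.natCast_nonneg _

lemma X_mul_mem_ordGE {e : K → ℤ} {b : RatFunc K} (hb : b ∈ ordGE e) :
    RatFunc.X * b ∈ ordGE e := by
  simpa using mul_mem_ordGE (algebraMap_mem_ordGE_zero X) hb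

lemma map_mul_mem_ordGE (τ : RatFunc K ≃ₐ[K] RatFunc K) {a : K}
    (hτ : τ RatFunc.X = RatFunc.X - RatFunc.C a) {u : RatFunc K} {e : K → ℤ}
    (he : ∀ z, e z ≤ e (z - a) + ordAt z u) {b : RatFunc K} (hb : b ∈ ordGE e) :
    τ b * u ∈ ordGE e := by
  have hτb : τ b ∈ ordGE fun z => e (z - a) := by
    intro hτb0 z
    rw [ordAt_map τ hτ]
    exact hb ((map_ne_zero τ).mp hτb0) (z - a)
  exact ordGE_anti he (mul_mem_ordGE hτb fun _ _ => le_rfl)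

end OrdAt

section LocalToGlobal

open Polynomial

variable {K : Type*} [Field K]

lemma ideal_eq_top_of_forall_exists_eval_ne_zero [IsAlgClosed K] {I : Ideal K[X]}
    (hI : ∀ z, ∃ p ∈ I, p.eval z ≠ 0) : I = ⊤ := by
  obtain ⟨g, rfl⟩ := IsPrincipalIdealRing.principal I
  by_contra htop
  have hdeg : g.degree ≠ 0 := fun h =>
    htop (Ideal.span_singleton_eq_top.mpr (isUnit_iff_degree_eq_zero.mpr h))
  obtain ⟨z, hz⟩ := IsAlgClosed.exists_root g hdeg
  obtain ⟨p, hp, hpz⟩ := hI z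
  exact hpz (hz.dvd (Ideal.mem_span_singleton.mp hp))

lemma algebraMap_mul_mem {V : Submodule K (RatFunc K)} (hX : ∀ b ∈ V, RatFunc.X * b ∈ V)
    (p : K[X]) {b : RatFunc K} (hb : b ∈ V) : algebraMap K[X] (RatFunc K) p * b ∈ V := by
  have h := aeval_apply_smul_mem_of_le_comap' hb p (RatFunc.X : RatFunc K) hX
  rwa [RatFunc.aeval_X_left_eq_algebraMap, smul_eq_mul] at h

/-- The ideal of denominators `{p | p x ∈ V}` of `x` modulo a `K[X]`-stable subspace `V`. -/
def denomIdeal (V : Submodule K (RatFunc K)) (hX : ∀ b ∈ V, RatFunc.X * b ∈ V) (x : RatFunc K) :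
    Ideal K[X] where
  carrier := {p | algebraMap K[X] (RatFunc K) p * x ∈ V}
  zero_mem' := by simp
  add_mem' {p q} hp hq := by
    simpa only [Set.mem_ofPred_eq, map_add, add_mul] using V.add_mem hp hq
  smul_mem' p q hq := by
    simpa only [Set.mem_ofPred_eq, smul_eq_mul, map_mul, mul_assoc] using algebraMap_mul_mem hX p hq

lemma eval_denom_ne_zero_of_ordAt_nonneg {z : K} {b : RatFunc K} (h : 0 ≤ ordAt z b) :
    b.denom.eval z ≠ 0 := by
  intro hroot
  have hdenom : 0 < b.denom.rootMultiplicity z :=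
    (rootMultiplicity_pos b.denom_ne_zero).mpr hroot
  have hnum : b.num.rootMultiplicity z = 0 :=
    rootMultiplicity_eq_zero fun hnum => by
      obtain ⟨v, w, hvw⟩ := b.isCoprime_num_denom
      simpa [hnum.eq_zero, hroot] using congrArg (eval z) hvw
  rw [ordAt] at h
  omega

lemma mem_of_forall_exists_ordAt_le [IsAlgClosed K] {V : Submodule K (RatFunc K)}
    (hX : ∀ b ∈ V, RatFunc.X * b ∈ V) {x : RatFunc K}
    (h : ∀ z, ∃ b ∈ V, b ≠ 0 ∧ ordAt z b ≤ ordAt z x) : x ∈ V := by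
  rcases eq_or_ne x 0 with rfl | hx
  · exact V.zero_mem
  suffices htop : denomIdeal V hX x = ⊤ by
    have hone : algebraMap K[X] (RatFunc K) 1 * x ∈ V := (Ideal.eq_top_iff_one _).mp htop
    rwa [map_one, one_mul] at hone
  refine ideal_eq_top_of_forall_exists_eval_ne_zero fun z => ?_
  obtain ⟨b, hbV, hb, hle⟩ := h z
  have hord : 0 ≤ ordAt z (x * b⁻¹) := by
    rw [ordAt_mul z hx (inv_ne_zero hb), ordAt_inv]
    omega
  refine ⟨(x * b⁻¹).denom, ?_, eval_denom_ne_zero_of_ordAt_nonneg hord⟩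
  have hclear : algebraMap K[X] (RatFunc K) (x * b⁻¹).denom * x =
      algebraMap K[X] (RatFunc K) (x * b⁻¹).num * b := by
    rw [(div_eq_iff (RatFunc.algebraMap_ne_zero (x * b⁻¹).denom_ne_zero)).mp
      (x * b⁻¹).num_div_denom]
    field_simp
  change algebraMap K[X] (RatFunc K) (x * b⁻¹).denom * x ∈ V
  rw [hclear]
  exact algebraMap_mul_mem hX _ hbV

lemma ordGE_le_of_forall_exists_ordAt_le [IsAlgClosed K] {e : K → ℤ} {V : Submodule K (RatFunc K)}
    (hX : ∀ b ∈ V, RatFunc.X * b ∈ V) (h : ∀ z, ∃ b ∈ V, b ≠ 0 ∧ ordAt z b ≤ e z) :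
    ordGE e ≤ V := by
  intro x hx
  rcases eq_or_ne x 0 with rfl | hx0
  · exact V.zero_mem
  refine mem_of_forall_exists_ordAt_le hX fun z => ?_
  obtain ⟨b, hbV, hb, hle⟩ := h z
  exact ⟨b, hbV, hb, hle.trans (hx hx0 z)⟩

end LocalToGlobal

section ShiftSum

variable {K : Type*} [Field K]

/-- The sum `∑_{n ≥ 0} f (z - n a)` of `f` over the half-progression from `z` in direction `-a`.
It is a `tsum` in the discrete space `ℤ`, so it is meaningful for finitely supported `f`. -/
def shiftSum (a : K) (f : K → ℤ) (z : K) : ℤ :=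
  ∑' n : ℕ, f (z - n * a)

lemma shiftSum_nonneg {a : K} {f : K → ℤ} (hf : 0 ≤ f) (z : K) : 0 ≤ shiftSum a f z :=
  tsum_nonneg fun _ => hf _

lemma shiftSum_comp_add (a c : K) (f : K → ℤ) (z : K) :
    shiftSum a (fun y => f (y + c)) z = shiftSum a f (z + c) := by
  simp only [shiftSum, sub_add_eq_add_sub]

lemma exists_of_shiftSum_ne_zero {a : K} {f : K → ℤ} {z : K} (h : shiftSum a f z ≠ 0) :
    ∃ n : ℕ, f (z - n * a) ≠ 0 := by
  contrapose! h
  simp [shiftSum, h]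

/-- The order function of the least nonzero subspace stable under `X` and the twisted shifts
`b ↦ σ b * u` and `b ↦ σ⁻¹ b * w`, where `σ X = X - a`, in terms of the order functions `f` of `u`
and `h` of `w`: starting from any nonzero `b`, iterating the two shifts leads to order
`shiftSum a f z` and `shiftSum (-a) h z` at `z`, respectively. -/
def socleOrder (a : K) (f h : K → ℤ) (z : K) : ℤ :=
  min (shiftSum a f z) (shiftSum (-a) h z)

lemma socleOrder_comm (a : K) (f h : K → ℤ) : socleOrder (-a) h f = socleOrder a f h := by
  ext z
  rw [socleOrder, socleOrder, neg_neg, min_comm]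

lemma shiftSum_add_intCast_mul {a : K} {f : K → ℤ} {s : K}
    (hf : ∀ i : ℤ, f (s + i * a) ≠ 0 → i = 0) (i : ℤ) :
    shiftSum a f (s + i * a) = if 0 ≤ i then f s else 0 := by
  have hterm (n : ℕ) (hn : (n : ℤ) ≠ i) : f (s + i * a - n * a) = 0 := by
    have hpoint : s + i * a - n * a = s + (i - n : ℤ) * a := by push_cast; ring
    rw [hpoint]
    by_contra h
    have := hf _ h
    omega
  split_ifs with hi
  · lift i to ℕ using hi
    rw [shiftSum, tsum_eq_single i fun n hn => hterm n (by exact_mod_cast hn)]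
    simp
  · rw [shiftSum, tsum_congr fun n => hterm n (by omega), tsum_zero]

variable [CharZero K] {a : K}

lemma summable_sub_natCast_mul (ha : a ≠ 0) {f : K → ℤ} (hf : f.HasFiniteSupport) (z : K) :
    Summable fun n : ℕ => f (z - n * a) := by
  have hinj : Function.Injective fun n : ℕ => z - n * a := fun n k h => by
    simpa [ha] using h
  exact summable_of_hasFiniteSupport (hf.comp_of_injective hinj)

lemma shiftSum_add (ha : a ≠ 0) {f g : K → ℤ} (hf : f.HasFiniteSupport) (hg : g.HasFiniteSupport)
    (z : K) : shiftSum a (f + g) z = shiftSum a f z + shiftSum a g z :=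
  (summable_sub_natCast_mul ha hf z).tsum_add (summable_sub_natCast_mul ha hg z)

lemma shiftSum_sub (ha : a ≠ 0) {f g : K → ℤ} (hf : f.HasFiniteSupport) (hg : g.HasFiniteSupport)
    (z : K) : shiftSum a (f - g) z = shiftSum a f z - shiftSum a g z :=
  (summable_sub_natCast_mul ha hf z).tsum_sub (summable_sub_natCast_mul ha hg z)

lemma shiftSum_eq_shiftSum_sub_add (ha : a ≠ 0) {f : K → ℤ} (hf : f.HasFiniteSupport) (z : K) :
    shiftSum a f z = shiftSum a f (z - a) + f z := by
  rw [shiftSum, (summable_sub_natCast_mul ha hf z).tsum_eq_zero_add, add_comm, shiftSum]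
  congr 1
  · refine tsum_congr fun n => congrArg f ?_
    push_cast
    ring
  · simp

lemma eventually_eq_zero (ha : a ≠ 0) {f : K → ℤ} (hf : f.HasFiniteSupport) (z : K) :
    ∀ᶠ n : ℕ in Filter.atTop, f (z - n * a) = 0 := by
  simpa only [nhds_discrete, Filter.tendsto_pure] using
    (summable_sub_natCast_mul ha hf z).tendsto_atTop_zero

lemma eventually_sum_range_eq_shiftSum (ha : a ≠ 0) {f : K → ℤ} (hf : f.HasFiniteSupport) (z : K) :
    ∀ᶠ n : ℕ in Filter.atTop, ∑ i ∈ Finset.range n, f (z - i * a) = shiftSum a f z := by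
  simpa only [shiftSum, nhds_discrete, Filter.tendsto_pure] using
    (summable_sub_natCast_mul ha hf z).hasSum.tendsto_sum_nat

lemma socleOrder_le_sub_add (ha : a ≠ 0) {f h : K → ℤ} (hf : f.HasFiniteSupport)
    (hh : h.HasFiniteSupport) (hfh : ∀ z, 0 ≤ f (z + a) + h z) (z : K) :
    socleOrder a f h z ≤ socleOrder a f h (z - a) + f z := by
  have hS := shiftSum_eq_shiftSum_sub_add ha hf z
  have hT := shiftSum_eq_shiftSum_sub_add (neg_ne_zero.mpr ha) hh (z - a)
  have hpos := hfh (z - a)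
  rw [sub_neg_eq_add, sub_add_cancel] at hT
  rw [sub_add_cancel] at hpos
  simp only [socleOrder]
  omega

end ShiftSum

section TwistedShift

variable {K : Type*} [Field K]

lemma exists_mem_ordAt_eq_add_sum (τ : RatFunc K ≃ₐ[K] RatFunc K) {a : K}
    (hτ : τ RatFunc.X = RatFunc.X - RatFunc.C a) {u : RatFunc K} (hu : u ≠ 0)
    {V : Submodule K (RatFunc K)} (hV : ∀ b ∈ V, τ b * u ∈ V) {b : RatFunc K} (hbV : b ∈ V)
    (hb : b ≠ 0) (n : ℕ) (z : K) :
    ∃ c ∈ V, c ≠ 0 ∧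
      ordAt z c = ordAt (z - n * a) b + ∑ i ∈ Finset.range n, ordAt (z - i * a) u := by
  induction n generalizing z with
  | zero => exact ⟨b, hbV, hb, by simp⟩
  | succ n ih =>
    obtain ⟨c, hcV, hc, hord⟩ := ih (z - a)
    have hτc : τ c ≠ 0 := (map_ne_zero τ).mpr hc
    refine ⟨τ c * u, hV c hcV, mul_ne_zero hτc hu, ?_⟩
    have hpoint (i : ℕ) : z - a - i * a = z - (i + 1 : ℕ) * a := by push_cast; ring
    simp only [hpoint] at hord
    rw [ordAt_mul z hτc hu, ordAt_map τ hτ, hord, Finset.sum_range_succ', Nat.cast_zero, zero_mul,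
      sub_zero, add_assoc]

variable [CharZero K]

lemma exists_mem_ordAt_eq_shiftSum (τ : RatFunc K ≃ₐ[K] RatFunc K) {a : K} (ha : a ≠ 0)
    (hτ : τ RatFunc.X = RatFunc.X - RatFunc.C a) {u : RatFunc K} (hu : u ≠ 0)
    {V : Submodule K (RatFunc K)} (hV : ∀ b ∈ V, τ b * u ∈ V) (hV0 : V ≠ ⊥) (z : K) :
    ∃ c ∈ V, c ≠ 0 ∧ ordAt z c = shiftSum a (ordAt · u) z := by
  obtain ⟨b, hbV, hb⟩ := V.exists_mem_ne_zero_of_ne_bot hV0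
  obtain ⟨n, hfar, hsum⟩ := ((eventually_eq_zero ha (hasFiniteSupport_ordAt b) z).and
    (eventually_sum_range_eq_shiftSum ha (hasFiniteSupport_ordAt u) z)).exists
  obtain ⟨c, hcV, hc, hord⟩ := exists_mem_ordAt_eq_add_sum τ hτ hu hV hbV hb n z
  exact ⟨c, hcV, hc, by rw [hord, hfar, hsum, zero_add]⟩

lemma map_mul_mem_ordGE_socleOrder (τ : RatFunc K ≃ₐ[K] RatFunc K) {a : K} (ha : a ≠ 0)
    (hτ : τ RatFunc.X = RatFunc.X - RatFunc.C a) {u w : RatFunc K}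
    (huw : ∀ z, 0 ≤ ordAt (z + a) u + ordAt z w) {b : RatFunc K}
    (hb : b ∈ ordGE (socleOrder a (ordAt · u) (ordAt · w))) :
    τ b * u ∈ ordGE (socleOrder a (ordAt · u) (ordAt · w)) :=
  map_mul_mem_ordGE τ hτ
    (socleOrder_le_sub_add ha (hasFiniteSupport_ordAt u) (hasFiniteSupport_ordAt w) huw) hb

lemma symm_map_mul_mem_ordGE_socleOrder (σ : RatFunc K ≃ₐ[K] RatFunc K) {a : K} (ha : a ≠ 0)
    (hσ : σ RatFunc.X = RatFunc.X - RatFunc.C a) {u w : RatFunc K}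
    (huw : ∀ z, 0 ≤ ordAt (z + a) u + ordAt z w) {b : RatFunc K}
    (hb : b ∈ ordGE (socleOrder a (ordAt · u) (ordAt · w))) :
    σ.symm b * w ∈ ordGE (socleOrder a (ordAt · u) (ordAt · w)) := by
  rw [← socleOrder_comm] at hb ⊢
  refine map_mul_mem_ordGE_socleOrder σ.symm (neg_ne_zero.mpr ha) (symm_map_X σ hσ) (fun z => ?_) hb
  simpa [add_comm] using huw (z + -a)

lemma ordGE_socleOrder_le [IsAlgClosed K] (σ : RatFunc K ≃ₐ[K] RatFunc K) {a : K} (ha : a ≠ 0)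
    (hσ : σ RatFunc.X = RatFunc.X - RatFunc.C a) {u w : RatFunc K} (hu : u ≠ 0) (hw : w ≠ 0)
    {V : Submodule K (RatFunc K)} (hV0 : V ≠ ⊥) (hX : ∀ b ∈ V, RatFunc.X * b ∈ V)
    (hE : ∀ b ∈ V, σ b * u ∈ V) (hF : ∀ b ∈ V, σ.symm b * w ∈ V) :
    ordGE (socleOrder a (ordAt · u) (ordAt · w)) ≤ V := by
  refine ordGE_le_of_forall_exists_ordAt_le hX fun z => ?_
  rcases min_choice (shiftSum a (ordAt · u) z) (shiftSum (-a) (ordAt · w) z) with hmin | hmin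
  · obtain ⟨c, hcV, hc, hord⟩ := exists_mem_ordAt_eq_shiftSum σ ha hσ hu hE hV0 z
    exact ⟨c, hcV, hc, (hord.trans hmin.symm).le⟩
  · obtain ⟨c, hcV, hc, hord⟩ :=
      exists_mem_ordAt_eq_shiftSum σ.symm (neg_ne_zero.mpr ha) (symm_map_X σ hσ) hw hF hV0 z
    exact ⟨c, hcV, hc, (hord.trans hmin.symm).le⟩

theorem ordGE_socleOrder_stable_and_le [IsAlgClosed K] (σ : RatFunc K ≃ₐ[K] RatFunc K) {a : K}
    (ha : a ≠ 0) (hσ : σ RatFunc.X = RatFunc.X - RatFunc.C a) {u w : RatFunc K} (hu : u ≠ 0)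
    (hw : w ≠ 0) (huw : ∀ z, 0 ≤ ordAt (z + a) u + ordAt z w) :
    (∀ b ∈ ordGE (socleOrder a (ordAt · u) (ordAt · w)),
      RatFunc.X * b ∈ ordGE (socleOrder a (ordAt · u) (ordAt · w)) ∧
      σ b * u ∈ ordGE (socleOrder a (ordAt · u) (ordAt · w)) ∧
      σ.symm b * w ∈ ordGE (socleOrder a (ordAt · u) (ordAt · w))) ∧
    ∀ V : Submodule K (RatFunc K), V ≠ ⊥ → (∀ b ∈ V, RatFunc.X * b ∈ V) →
      (∀ b ∈ V, σ b * u ∈ V) → (∀ b ∈ V, σ.symm b * w ∈ V) →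
      ordGE (socleOrder a (ordAt · u) (ordAt · w)) ≤ V :=
  ⟨fun _ hb => ⟨X_mul_mem_ordGE hb, map_mul_mem_ordGE_socleOrder σ ha hσ huw hb,
    symm_map_mul_mem_ordGE_socleOrder σ ha hσ huw hb⟩,
    fun _ hV0 hX hE hF => ordGE_socleOrder_le σ ha hσ hu hw hV0 hX hE hF⟩

end TwistedShift

section PolarParts

open Polynomial

variable {K : Type*} [Field K]

/-- The polynomials together with the simple fractions `(X - z)⁻ᵏ` whose pole order is allowed by
`e`; they span `ordGE e` when `e ≤ 0`. -/
def polarParts (e : K → ℤ) : Set (RatFunc K) :=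
  Set.range (algebraMap K[X] (RatFunc K)) ∪
    {b | ∃ (z : K) (k : ℕ), (k : ℤ) ≤ -e z ∧ b = ((RatFunc.X - RatFunc.C z) ^ k)⁻¹}

lemma ordAt_inv_X_sub_C_pow (y z : K) (k : ℕ) :
    ordAt y ((RatFunc.X - RatFunc.C z) ^ k)⁻¹ = -(k * Finsupp.single z 1 y) := by
  rw [ordAt_inv, ← zpow_natCast, ordAt_zpow y (ratFunc_X_sub_C_ne_zero z), ordAt_X_sub_C]

lemma X_mul_mem_span_polarParts (e : K → ℤ) {b : RatFunc K}
    (hb : b ∈ Submodule.span K (polarParts e)) :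
    RatFunc.X * b ∈ Submodule.span K (polarParts e) := by
  suffices hle : Submodule.span K (polarParts e) ≤
      (Submodule.span K (polarParts e)).comap (LinearMap.mulLeft K (RatFunc.X : RatFunc K)) from
    hle hb
  have hpoly (p : K[X]) : algebraMap K[X] (RatFunc K) p ∈ Submodule.span K (polarParts e) :=
    Submodule.subset_span (Or.inl ⟨p, rfl⟩)
  refine Submodule.span_le.mpr ?_
  rintro _ (⟨p, rfl⟩ | ⟨z, k, hk, rfl⟩)
  · rw [SetLike.mem_coe, Submodule.mem_comap, LinearMap.mulLeft_apply, ← RatFunc.algebraMap_X,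
      ← map_mul]
    exact hpoly (X * p)
  · rcases k with _ | k
    · simpa using hpoly X
    have hsplit : RatFunc.X * ((RatFunc.X - RatFunc.C z) ^ (k + 1))⁻¹ =
        ((RatFunc.X - RatFunc.C z) ^ k)⁻¹ + z • ((RatFunc.X - RatFunc.C z) ^ (k + 1))⁻¹ := by
      have hne := ratFunc_X_sub_C_ne_zero z
      rw [RatFunc.smul_eq_C_mul]
      field_simp
      ring
    rw [SetLike.mem_coe, Submodule.mem_comap, LinearMap.mulLeft_apply, hsplit]
    exact add_mem (Submodule.subset_span (Or.inr ⟨z, k, by omega, rfl⟩))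
      (Submodule.smul_mem _ _ (Submodule.subset_span (Or.inr ⟨z, k + 1, hk, rfl⟩)))

lemma polarParts_subset_ordGE {e : K → ℤ} (he : e ≤ 0) : polarParts e ⊆ ordGE e := by
  rintro _ (⟨p, rfl⟩ | ⟨z, k, hk, rfl⟩)
  · exact ordGE_anti he (algebraMap_mem_ordGE_zero p)
  · intro _ y
    rw [ordAt_inv_X_sub_C_pow]
    rcases eq_or_ne z y with rfl | hzy
    · rw [Finsupp.single_eq_same]
      omega
    · rw [Finsupp.single_eq_of_ne hzy.symm, mul_zero, neg_zero]
      exact he y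

lemma span_polarParts [IsAlgClosed K] {e : K → ℤ} (he : e ≤ 0) :
    Submodule.span K (polarParts e) = ordGE e := by
  refine le_antisymm (Submodule.span_le.mpr (polarParts_subset_ordGE he))
    (ordGE_le_of_forall_exists_ordAt_le (fun _ => X_mul_mem_span_polarParts e) fun z => ?_)
  have hk : ((-e z).toNat : ℤ) = -e z := Int.toNat_of_nonneg (neg_nonneg.mpr (he z))
  refine ⟨((RatFunc.X - RatFunc.C z) ^ (-e z).toNat)⁻¹,
    Submodule.subset_span (Or.inr ⟨z, _, hk.le, rfl⟩),
    inv_ne_zero (pow_ne_zero _ (ratFunc_X_sub_C_ne_zero z)), ?_⟩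
  rw [ordAt_inv_X_sub_C_pow, Finsupp.single_eq_same, hk]
  omega

end PolarParts

section RootCount

/-- The order function of `(X - r₁) (X - r₂)`. -/
def rootOrder (r₁ r₂ : ℂ) : ℂ →₀ ℤ :=
  Finsupp.single r₁ 1 + Finsupp.single r₂ 1

lemma rootOrder_nonneg (r₁ r₂ : ℂ) : 0 ≤ rootOrder r₁ r₂ :=
  add_nonneg (Finsupp.single_nonneg.mpr zero_le_one) (Finsupp.single_nonneg.mpr zero_le_one)

lemma rootOrder_eq_zero {r₁ r₂ z : ℂ} (h₁ : r₁ ≠ z) (h₂ : r₂ ≠ z) : rootOrder r₁ r₂ z = 0 := by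
  rw [rootOrder, Finsupp.add_apply, Finsupp.single_eq_of_ne h₁.symm,
    Finsupp.single_eq_of_ne h₂.symm, add_zero]

open Classical in
lemma shiftSum_single {K : Type*} [Field K] [CharZero K] {a : K} (ha : a ≠ 0) (r z : K) :
    shiftSum a (Finsupp.single r 1) z = if ∃ n : ℕ, r = z - n * a then 1 else 0 := by
  split_ifs with h
  · obtain ⟨n, rfl⟩ := h
    rw [shiftSum, tsum_eq_single n fun k hk => Finsupp.single_eq_of_ne (by simpa [ha] using hk),
      Finsupp.single_eq_same]
  · push Not at h
    rw [shiftSum, tsum_congr fun n => Finsupp.single_eq_of_ne (h n).symm, tsum_zero]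

lemma exists_le_eq_sub_iff {r s : ℂ} (hr : ∀ n : ℕ, r ≠ s - 2 + 2 * n) (i : ℕ) :
    (∃ l : ℕ, 2 ≤ l ∧ l ≤ i ∧ r = s - 2 * (l : ℂ)) ↔ ∃ n : ℕ, r = s - 2 * i - n * (-2) := by
  constructor
  · rintro ⟨l, -, hli, rfl⟩
    refine ⟨i - l, ?_⟩
    push_cast [hli]
    ring
  · rintro ⟨n, rfl⟩
    rcases le_or_gt (n + 2) i with hni | hni
    · refine ⟨i - n, by omega, by omega, ?_⟩
      push_cast [show n ≤ i by omega]
      ring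
    · refine absurd ?_ (hr (n + 1 - i))
      push_cast [show i ≤ n + 1 by omega]
      ring

open Classical in
lemma rootCount_eq_shiftSum {r₁ r₂ s : ℂ} (hr : ∀ n : ℕ, r₁ ≠ s - 2 + 2 * n ∧ r₂ ≠ s - 2 + 2 * n)
    (i : ℕ) : rootCount r₁ r₂ s i = shiftSum (-2) (rootOrder r₁ r₂) (s - 2 * i) := by
  have h2 : (-2 : ℂ) ≠ 0 := by norm_num
  have h₁ := exists_le_eq_sub_iff (fun n => (hr n).1) i
  have h₂ := exists_le_eq_sub_iff (fun n => (hr n).2) i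
  rw [rootOrder, Finsupp.coe_add,
    shiftSum_add h2 (Finsupp.hasFiniteSupport _) (Finsupp.hasFiniteSupport _),
    shiftSum_single h2, shiftSum_single h2, rootCount]
  simp only [h₁, h₂]

end RootCount

section Kgen

variable {r₁ r₂ : ℂ} {m : ℂ →₀ ℤ}

/-- Distinct points of the support of `m` are incongruent modulo `2ℤ`. -/
def IncongruentSupport (m : ℂ →₀ ℤ) : Prop :=
  ∀ s, m s ≠ 0 → ∀ i : ℤ, m (s + 2 * i) ≠ 0 → i = 0

/-- On the progressions `s + 2ℤ` through the zeros `s` prescribed by `m`, the roots `r₁` and `r₂`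
can only be among `s - 4, s - 6, …`. -/
def RootsBelow (r₁ r₂ : ℂ) (m : ℂ →₀ ℤ) : Prop :=
  ∀ s, 0 < m s → ∀ n : ℕ, r₁ ≠ s - 2 + 2 * n ∧ r₂ ≠ s - 2 + 2 * n

/-- The `socleOrder` of the `sl₂`-action, where `m` is the order function of `u` and
`θ - (X + 1)²` has the roots `r₁` and `r₂`. -/
def sl2SocleOrder (r₁ r₂ : ℂ) (m : ℂ →₀ ℤ) : ℂ → ℤ :=
  socleOrder 2 m fun z => rootOrder r₁ r₂ z - m (z + 2)

lemma sl2SocleOrder_eq_min (r₁ r₂ : ℂ) (m : ℂ →₀ ℤ) (z : ℂ) :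
    sl2SocleOrder r₁ r₂ m z = min (shiftSum 2 m z)
      (shiftSum (-2) (rootOrder r₁ r₂) z - shiftSum (-2) m (z + 2)) := by
  have hshift : (fun z => m (z + 2)).HasFiniteSupport :=
    m.hasFiniteSupport.comp_of_injective (add_left_injective 2)
  rw [sl2SocleOrder, socleOrder, ← shiftSum_comp_add,
    ← shiftSum_sub (by norm_num) (Finsupp.hasFiniteSupport _) hshift, Pi.sub_def]

lemma shiftSum_two_add (hm : IncongruentSupport m) {s : ℂ} (hs : m s ≠ 0) (i : ℕ) :
    shiftSum 2 m (s + 2 * i) = m s := by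
  have h := shiftSum_add_intCast_mul (a := 2) (f := m) (s := s)
    (fun i hi => hm s hs i (by rwa [mul_comm])) i
  simpa [mul_comm] using h

lemma shiftSum_neg_two_add (hm : IncongruentSupport m) {s : ℂ} (hs : m s ≠ 0) (i : ℤ) :
    shiftSum (-2) m (s + 2 * i) = if i ≤ 0 then m s else 0 := by
  have h := shiftSum_add_intCast_mul (a := -2) (f := m) (s := s)
    (fun i hi => neg_eq_zero.mp (hm s hs (-i) (by simpa [mul_comm] using hi))) (-i)
  simpa [mul_comm] using h

lemma le_neg_shiftSum_two_iff (hm : IncongruentSupport m) {k : ℕ}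
    (hk : 1 ≤ k) (z : ℂ) :
    (k : ℤ) ≤ -shiftSum 2 m z ↔
      ∃ s, m s < 0 ∧ ∃ i : ℕ, (k : ℤ) ≤ -m s ∧ z = s + 2 * i := by
  constructor
  · intro h
    obtain ⟨i, hi⟩ := exists_of_shiftSum_ne_zero (show shiftSum 2 m z ≠ 0 by omega)
    have hz : z = z - i * 2 + 2 * i := by ring
    rw [hz, shiftSum_two_add hm hi] at h
    exact ⟨z - i * 2, by omega, i, h, hz⟩
  · rintro ⟨s, hs, i, h, rfl⟩
    rwa [shiftSum_two_add hm hs.ne]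

lemma le_neg_shiftSum_neg_two_iff (hm : IncongruentSupport m) (hr : RootsBelow r₁ r₂ m) {k : ℕ}
    (hk : 1 ≤ k) (z : ℂ) :
    (k : ℤ) ≤ -(shiftSum (-2) (rootOrder r₁ r₂) z - shiftSum (-2) m (z + 2)) ↔
      ∃ s, 0 < m s ∧ ∃ i : ℕ, 0 < i ∧ (k : ℤ) ≤ m s - rootCount r₁ r₂ s i ∧ z = s - 2 * i := by
  have hvalue {s : ℂ} (hs : m s ≠ 0) {i : ℕ} (hi : 0 < i) :
      shiftSum (-2) m (s - 2 * i + 2) = m s := by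
    have hpoint : s - 2 * i + 2 = s + 2 * (1 - i : ℤ) := by push_cast; ring
    rw [hpoint, shiftSum_neg_two_add hm hs, if_pos (by omega)]
  constructor
  · intro h
    have hroots : 0 ≤ shiftSum (-2) (rootOrder r₁ r₂) z :=
      shiftSum_nonneg (rootOrder_nonneg r₁ r₂) z
    obtain ⟨n, hn⟩ := exists_of_shiftSum_ne_zero (show shiftSum (-2) m (z + 2) ≠ 0 by omega)
    set s := z + 2 - n * (-2) with hs
    have hz : z = s - 2 * (n + 1 : ℕ) := by rw [hs]; push_cast; ring
    have hmz : shiftSum (-2) m (z + 2) = m s := by rw [hz, hvalue hn n.succ_pos]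
    have hpos : 0 < m s := by omega
    refine ⟨s, hpos, n + 1, n.succ_pos, ?_, hz⟩
    rw [rootCount_eq_shiftSum (hr s hpos), ← hz]
    omega
  · rintro ⟨s, hs, i, hi, h, rfl⟩
    rw [rootCount_eq_shiftSum (hr s hs)] at h
    rw [hvalue hs.ne' hi]
    omega

lemma sl2SocleOrder_nonpos (hm : IncongruentSupport m) (hr : RootsBelow r₁ r₂ m) :
    sl2SocleOrder r₁ r₂ m ≤ 0 := by
  intro z
  rw [sl2SocleOrder_eq_min, Pi.zero_apply, min_le_iff]
  by_contra! h
  obtain ⟨hS, hT⟩ := h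
  obtain ⟨n, hn⟩ := exists_of_shiftSum_ne_zero hS.ne'
  set s := z - n * 2 with hs
  have hz : z = s + 2 * n := by rw [hs]; ring
  have hpos : 0 < m s := by simpa only [hz, shiftSum_two_add hm hn] using hS
  have hroots : shiftSum (-2) (rootOrder r₁ r₂) z = 0 := by
    by_contra hne
    obtain ⟨k, hk⟩ := exists_of_shiftSum_ne_zero hne
    have hpoint : z - k * (-2) = s - 2 + 2 * (n + k + 1 : ℕ) := by rw [hz]; push_cast; ring
    obtain ⟨h₁, h₂⟩ := hr s hpos (n + k + 1)
    exact hk (hpoint ▸ rootOrder_eq_zero h₁ h₂)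
  have hshift : shiftSum (-2) m (z + 2) = 0 := by
    have hpoint : z + 2 = s + 2 * (n + 1 : ℤ) := by rw [hz]; push_cast; ring
    rw [hpoint]
    exact_mod_cast (shiftSum_neg_two_add hm hn (n + 1)).trans (if_neg (by omega))
  rw [hroots, hshift] at hT
  exact hT.false

lemma Kgen_eq_polarParts (hm : IncongruentSupport m) (hr : RootsBelow r₁ r₂ m) :
    Kgen r₁ r₂ m = polarParts (sl2SocleOrder r₁ r₂ m) := by
  have hpole {k : ℕ} (hk : 1 ≤ k) (z : ℂ) : (k : ℤ) ≤ -sl2SocleOrder r₁ r₂ m z ↔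
      (∃ s, m s < 0 ∧ ∃ i : ℕ, (k : ℤ) ≤ -m s ∧ z = s + 2 * i) ∨
      ∃ s, 0 < m s ∧ ∃ i : ℕ, 0 < i ∧ (k : ℤ) ≤ m s - rootCount r₁ r₂ s i ∧ z = s - 2 * i := by
    rw [← le_neg_shiftSum_two_iff hm hk, ← le_neg_shiftSum_neg_two_iff hm hr hk,
      sl2SocleOrder_eq_min, ← max_neg_neg, le_max_iff]
  ext x
  constructor
  · rintro ((⟨p, rfl⟩ | ⟨s, hs, i, k, hk, hks, rfl⟩) | ⟨s, hs, i, k, hi, hk, hks, rfl⟩)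
    · exact Or.inl ⟨p, rfl⟩
    · exact Or.inr ⟨_, k, (hpole hk _).mpr (Or.inl ⟨s, hs, i, hks, rfl⟩), rfl⟩
    · exact Or.inr ⟨_, k, (hpole hk _).mpr (Or.inr ⟨s, hs, i, hi, hks, rfl⟩), rfl⟩
  · rintro (⟨p, rfl⟩ | ⟨z, k, hkz, rfl⟩)
    · exact Or.inl (Or.inl ⟨p, rfl⟩)
    rcases Nat.eq_zero_or_pos k with rfl | hk
    · exact Or.inl (Or.inl ⟨1, by simp⟩)
    rcases (hpole hk z).mp hkz with ⟨s, hs, i, hks, rfl⟩ | ⟨s, hs, i, hi, hks, rfl⟩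
    · exact Or.inl (Or.inr ⟨s, hs, i, k, hk, hks, rfl⟩)
    · exact Or.inr ⟨s, hs, i, k, hi, hk, hks, rfl⟩

lemma span_Kgen_eq (hm : IncongruentSupport m) (hr : RootsBelow r₁ r₂ m) :
    Submodule.span ℂ (Kgen r₁ r₂ m) = ordGE (sl2SocleOrder r₁ r₂ m) := by
  rw [Kgen_eq_polarParts hm hr, span_polarParts (sl2SocleOrder_nonpos hm hr)]

end Kgen

section Divisor

variable {K : Type*} [Field K]

lemma C_mul_prod_X_sub_C_zpow_ne_zero {c : K} (hc : c ≠ 0) (m : K →₀ ℤ) :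
    RatFunc.C c * m.prod (fun t n => (RatFunc.X - RatFunc.C t) ^ n) ≠ 0 :=
  mul_ne_zero (by simpa using hc)
    (Finset.prod_ne_zero_iff.mpr fun t _ => zpow_ne_zero _ (ratFunc_X_sub_C_ne_zero t))

lemma ordAt_C_mul_prod_X_sub_C_zpow {c : K} (hc : c ≠ 0) (m : K →₀ ℤ) (z : K) :
    ordAt z (RatFunc.C c * m.prod fun t n => (RatFunc.X - RatFunc.C t) ^ n) = m z := by
  classical
  obtain ⟨hC, hprod⟩ := mul_ne_zero_iff.mp (C_mul_prod_X_sub_C_zpow_ne_zero hc m)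
  rw [ordAt_mul z hC hprod, ordAt_C, zero_add, Finsupp.prod,
    ordAt_prod z _ _ fun t _ => zpow_ne_zero _ (ratFunc_X_sub_C_ne_zero t)]
  simp only [ordAt_zpow z (ratFunc_X_sub_C_ne_zero _), ordAt_X_sub_C, Finsupp.single_apply,
    mul_ite, mul_one, mul_zero, Finset.sum_ite_eq']
  simp +contextual [eq_comm]

lemma sub_sq_div_four_eq_C_mul_prod {θ r₁ r₂ : ℂ}
    (hr : RatFunc.C θ - (RatFunc.X + 1) ^ 2 =
      -((RatFunc.X - RatFunc.C r₁) * (RatFunc.X - RatFunc.C r₂))) :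
    (RatFunc.C θ - (RatFunc.X + 1) ^ 2) / 4 = RatFunc.C (-1 / 4) *
      (rootOrder r₁ r₂).prod fun t n => (RatFunc.X - RatFunc.C t) ^ n := by
  rw [hr, rootOrder, Finsupp.prod_add_index' (fun _ => zpow_zero _)
    (fun t => zpow_add₀ (ratFunc_X_sub_C_ne_zero t)), Finsupp.prod_single_index (zpow_zero _),
    Finsupp.prod_single_index (zpow_zero _), zpow_one, zpow_one, map_div₀, map_neg, map_one,
    map_ofNat]
  ring

end Divisor

section Strip

lemma incongruentSupport_of_strip {ω : ℝ} {m : ℂ →₀ ℤ}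
    (hm : ∀ s ∈ m.support, ω ≤ s.re ∧ s.re < ω + 2) : IncongruentSupport m := by
  intro s hs i hi
  have hs_re := hm s (Finsupp.mem_support_iff.mpr hs)
  have hi_re := hm (s + 2 * i) (Finsupp.mem_support_iff.mpr hi)
  have hre : (s + 2 * i : ℂ).re = s.re + 2 * i := by simp
  rw [hre] at hi_re
  have hlt : (i : ℝ) < 1 := by linarith
  have hgt : (-1 : ℝ) < i := by linarith
  norm_cast at hlt hgt
  omega

lemma rootsBelow_of_strip {r₁ r₂ : ℂ} {ω : ℝ} (hω : ω = 3 + max r₁.re r₂.re) {m : ℂ →₀ ℤ}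
    (hm : ∀ s ∈ m.support, ω ≤ s.re ∧ s.re < ω + 2) : RootsBelow r₁ r₂ m := by
  intro s hs n
  have hs_re := (hm s (Finsupp.mem_support_iff.mpr hs.ne')).1
  have hfar (r : ℂ) (hr : r.re ≤ ω - 3) : r ≠ s - 2 + 2 * n := by
    rintro rfl
    have hre : (s - 2 + 2 * n : ℂ).re = s.re - 2 + 2 * n := by simp
    rw [hre] at hr
    linarith [n.cast_nonneg (α := ℝ)]
  exact ⟨hfar r₁ (by linarith [le_max_left r₁.re r₂.re]),
    hfar r₂ (by linarith [le_max_right r₁.re r₂.re])⟩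

end Strip

theorem stmt10_general (σ : RatFunc ℂ ≃ₐ[ℂ] RatFunc ℂ) (hσ : σ RatFunc.X = RatFunc.X - 2)
    (θ r₁ r₂ : ℂ)
    (hr : RatFunc.C θ - (RatFunc.X + 1) ^ 2 =
      -((RatFunc.X - RatFunc.C r₁) * (RatFunc.X - RatFunc.C r₂)))
    (c : ℂ) (hc : c ≠ 0) (m : ℂ →₀ ℤ) (hm : IncongruentSupport m) (hrm : RootsBelow r₁ r₂ m)
    (u : RatFunc ℂ)
    (hu : u = RatFunc.C c * m.prod (fun t (n : ℤ) => (RatFunc.X - RatFunc.C t) ^ n))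
    (E F : RatFunc ℂ → RatFunc ℂ)
    (hE : ∀ b, E b = σ b * u)
    (hF : ∀ b, F b = (RatFunc.C θ - (RatFunc.X + 1) ^ 2) / 4 * σ.symm b * (σ.symm u)⁻¹) :
    (∀ b ∈ Submodule.span ℂ (Kgen r₁ r₂ m),
      RatFunc.X * b ∈ Submodule.span ℂ (Kgen r₁ r₂ m) ∧
      E b ∈ Submodule.span ℂ (Kgen r₁ r₂ m) ∧
      F b ∈ Submodule.span ℂ (Kgen r₁ r₂ m)) ∧
    (∀ V : Submodule ℂ (RatFunc ℂ), V ≠ ⊥ →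
      (∀ b ∈ V, RatFunc.X * b ∈ V) →
      (∀ b ∈ V, E b ∈ V) →
      (∀ b ∈ V, F b ∈ V) →
      Submodule.span ℂ (Kgen r₁ r₂ m) ≤ V) := by
  have hσ' : σ RatFunc.X = RatFunc.X - RatFunc.C 2 := by rw [hσ, map_ofNat]
  have hc' : (-1 / 4 : ℂ) ≠ 0 := by norm_num
  rw [sub_sq_div_four_eq_C_mul_prod hr] at hF
  set q := RatFunc.C (-1 / 4) *
    (rootOrder r₁ r₂).prod fun t n => (RatFunc.X - RatFunc.C t) ^ n with hq
  have hu0 : u ≠ 0 := hu ▸ C_mul_prod_X_sub_C_zpow_ne_zero hc m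
  have hq0 : q ≠ 0 := C_mul_prod_X_sub_C_zpow_ne_zero hc' (rootOrder r₁ r₂)
  have hσu0 : (σ.symm u)⁻¹ ≠ 0 := inv_ne_zero ((map_ne_zero σ.symm).mpr hu0)
  have hordu (z : ℂ) : ordAt z u = m z := hu ▸ ordAt_C_mul_prod_X_sub_C_zpow hc m z
  have hordw (z : ℂ) : ordAt z (q * (σ.symm u)⁻¹) = rootOrder r₁ r₂ z - m (z + 2) := by
    rw [ordAt_mul z hq0 hσu0, ordAt_inv, ordAt_map σ.symm (symm_map_X σ hσ'), hordu, hq,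
      ordAt_C_mul_prod_X_sub_C_zpow hc', sub_neg_eq_add, sub_eq_add_neg]
  have hK : Submodule.span ℂ (Kgen r₁ r₂ m) =
      ordGE (socleOrder 2 (ordAt · u) (ordAt · (q * (σ.symm u)⁻¹))) := by
    simp only [span_Kgen_eq hm hrm, sl2SocleOrder, hordu, hordw]
  have hF' (b : RatFunc ℂ) : F b = σ.symm b * (q * (σ.symm u)⁻¹) := by rw [hF]; ring
  simp only [hK, hE, hF']
  refine ordGE_socleOrder_stable_and_le σ two_ne_zero hσ' hu0 (mul_ne_zero hq0 hσu0) fun z => ?_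
  rw [hordu, hordw, add_sub_cancel]
  exact rootOrder_nonneg r₁ r₂ z

/-- Main theorem: with `u = c·∏_{t ∈ ℂ_ω}(X − t)^{m t}` as in the classification, the
subspace `K_u` is invariant under multiplication by `X` and under `E_u`, `F_u`, and every
nonzero invariant subspace of `ℂ(X)` contains `K_u`; hence `K_u` is the unique simple
submodule `L_u` of `ℂ(X)` for this `sl₂`-action. -/
theorem stmt10 (σ : RatFunc ℂ ≃ₐ[ℂ] RatFunc ℂ) (hσ : σ RatFunc.X = RatFunc.X - 2)
    (θ r₁ r₂ : ℂ)
    (hr : RatFunc.C θ - (RatFunc.X + 1) ^ 2 =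
      -((RatFunc.X - RatFunc.C r₁) * (RatFunc.X - RatFunc.C r₂)))
    (ω : ℝ) (hω : ω = 3 + max r₁.re r₂.re)
    (c : ℂ) (hc : c ≠ 0) (m : ℂ →₀ ℤ)
    (hm : ∀ s ∈ m.support, ω ≤ s.re ∧ s.re < ω + 2)
    (u : RatFunc ℂ)
    (hu : u = RatFunc.C c * m.prod (fun t (n : ℤ) => (RatFunc.X - RatFunc.C t) ^ n))
    (E F : RatFunc ℂ → RatFunc ℂ)
    (hE : ∀ b, E b = σ b * u)
    (hF : ∀ b, F b = (RatFunc.C θ - (RatFunc.X + 1) ^ 2) / 4 * σ.symm b * (σ.symm u)⁻¹) :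
    (∀ b ∈ Submodule.span ℂ (Kgen r₁ r₂ m),
      RatFunc.X * b ∈ Submodule.span ℂ (Kgen r₁ r₂ m) ∧
      E b ∈ Submodule.span ℂ (Kgen r₁ r₂ m) ∧
      F b ∈ Submodule.span ℂ (Kgen r₁ r₂ m)) ∧
    (∀ V : Submodule ℂ (RatFunc ℂ), V ≠ ⊥ →
      (∀ b ∈ V, RatFunc.X * b ∈ V) →
      (∀ b ∈ V, E b ∈ V) →
      (∀ b ∈ V, F b ∈ V) →
      Submodule.span ℂ (Kgen r₁ r₂ m) ≤ V) :=
  stmt10_general σ hσ θ r₁ r₂ hr c hc m (incongruentSupport_of_strip hm)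
    (rootsBelow_of_strip hω hm) u hu E F hE hF

end
end

section
/- With θ, r₁, r₂, ω, c, m, u as in the classification (u = c·∏_{t ∈ ℂ_ω}(X − t)^{m(t)} with supp m ⊆ ℂ_ω, ω = 3 + max(Re r₁, Re r₂)), the module L_u = K_u is finitely generated over ℂ[X] if and only if for every s ∈ ℂ_ω one has 0 ≤ m(s) ≤ #{j ∈ {1,2} : r_j ∈ s − 2ℤ_{>0}}. -/
noncomputable section

/-!
The elements of a finitely generated `ℂ[X]`-submodule of `ℂ(X)` have a common denominator, so
`1 / (X - a)` lies in it for finitely many `a` only. This excludes `m s < 0`, which puts a pole at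
every `s + 2i`, and also `m s > #{j | r_j ∈ s - 2ℤ_{>0}}`, which puts a pole at every `s - 2i` with
`i > 0`. Conversely, `1` generates all polynomials. The strip `ℂ_ω` lies so far to the right that
`r_j ≠ s - 2` for all `s` in it, hence the number of `j` with `r_j ∈ {s - 4, …, s - 2i}` is
`#{j | r_j ∈ s - 2ℤ_{>0}}` for large `i`, and only finitely many fractions are left.
-/

section Algebra

open Polynomial

theorem fg_span_of_finite_diff_range_algebraMap {A B : Type*} [CommSemiring A] [Semiring B]
    [Algebra A B] {G : Set B} (h_one : 1 ∈ G) (hG : (G \ Set.range (algebraMap A B)).Finite) :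
    (Submodule.span A G).FG := by
  have h_span : Submodule.span A G =
      Submodule.span A (insert 1 (G \ Set.range (algebraMap A B))) := by
    refine Submodule.span_eq_span (fun x hx ↦ ?_) ?_
    · by_cases hx_range : x ∈ Set.range (algebraMap A B)
      · obtain ⟨a, rfl⟩ := hx_range
        rw [Algebra.algebraMap_eq_smul_one]
        exact Submodule.smul_mem _ a (Submodule.subset_span (Set.mem_insert _ _))
      · exact Submodule.subset_span (Set.mem_insert_of_mem _ ⟨hx, hx_range⟩)
    · exact (Set.insert_subset h_one Set.sdiff_subset).trans Submodule.subset_span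
  exact h_span ▸ Submodule.fg_span (hG.insert 1)

variable {K : Type*} [Field K]

theorem isRoot_of_isInteger_smul_inv_X_sub_C {d : K[X]} {a : K}
    (h : IsLocalization.IsInteger K[X] (d • (RatFunc.X - RatFunc.C a : RatFunc K)⁻¹)) :
    d.IsRoot a := by
  obtain ⟨q, hq⟩ := h
  have h_map : (RatFunc.X - RatFunc.C a : RatFunc K) = algebraMap K[X] (RatFunc K) (X - C a) := by
    simp
  have h_ne : algebraMap K[X] (RatFunc K) (X - C a) ≠ 0 :=
    RatFunc.algebraMap_ne_zero (X_sub_C_ne_zero a)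
  rw [h_map, Algebra.smul_def, eq_mul_inv_iff_mul_eq₀ h_ne, ← map_mul] at hq
  exact dvd_iff_isRoot.mp (Dvd.intro_left q (RatFunc.algebraMap_injective K hq))

theorem finite_setOf_inv_X_sub_C_mem_of_fg {M : Submodule K[X] (RatFunc K)} (hM : M.FG) :
    {a : K | (RatFunc.X - RatFunc.C a)⁻¹ ∈ M}.Finite := by
  obtain ⟨d, hd, hdM⟩ := FractionalIdeal.isFractional_of_fg (S := nonZeroDivisors K[X]) hM
  exact (finite_setOfPred_isRoot (nonZeroDivisors.ne_zero hd)).subset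
    fun a ha ↦ isRoot_of_isInteger_smul_inv_X_sub_C (hdM _ ha)

end Algebra

section RootCount

theorem eventually_exists_two_le_iff_exists_pos {R : Type*} [Ring R] {r s : R}
    (hr : r + 2 ≠ s) :
    ∀ᶠ i : ℕ in Filter.atTop, (∃ l : ℕ, 2 ≤ l ∧ l ≤ i ∧ r = s - 2 * (l : R)) ↔
      ∃ l : ℕ, 0 < l ∧ r = s - 2 * (l : R) := by
  by_cases h : ∃ l : ℕ, 0 < l ∧ r = s - 2 * (l : R)
  · obtain ⟨l, hl, hrl⟩ := h
    have hl_ne : l ≠ 1 := by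
      rintro rfl
      exact hr (by simp [hrl])
    filter_upwards [Filter.eventually_ge_atTop l] with i hi
    exact iff_of_true ⟨l, by lia, hi, hrl⟩ ⟨l, hl, hrl⟩
  · exact .of_forall fun i ↦ iff_of_false (fun ⟨l, hl, _, hrl⟩ ↦ h ⟨l, by lia, hrl⟩) h

variable (r₁ r₂ s : ℂ)

open Classical in
/-- The number of indices `j ∈ {1, 2}` with `r_j ∈ s - 2ℤ_{>0}`, the bound on `m s` in the
finiteness criterion. -/
def totalRootCount : ℤ :=
  (if ∃ l : ℕ, 0 < l ∧ r₁ = s - 2 * (l : ℂ) then 1 else 0) +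
  (if ∃ l : ℕ, 0 < l ∧ r₂ = s - 2 * (l : ℂ) then 1 else 0)

theorem rootCount_nonneg (i : ℕ) : 0 ≤ rootCount r₁ r₂ s i := by
  unfold rootCount
  positivity

theorem rootCount_le_totalRootCount (i : ℕ) :
    rootCount r₁ r₂ s i ≤ totalRootCount r₁ r₂ s := by
  have h_imp (r : ℂ) : (∃ l : ℕ, 2 ≤ l ∧ l ≤ i ∧ r = s - 2 * (l : ℂ)) →
      ∃ l : ℕ, 0 < l ∧ r = s - 2 * (l : ℂ) :=
    fun ⟨l, hl, _, hr⟩ ↦ ⟨l, by lia, hr⟩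
  classical
  have h_le {p q : Prop} (h : p → q) : (if p then 1 else 0 : ℤ) ≤ if q then 1 else 0 := by
    grind
  exact add_le_add (h_le (h_imp r₁)) (h_le (h_imp r₂))

variable {r₁ r₂ s}

theorem eventually_rootCount_eq_totalRootCount (h₁ : r₁ + 2 ≠ s) (h₂ : r₂ + 2 ≠ s) :
    ∀ᶠ i in Filter.atTop, rootCount r₁ r₂ s i = totalRootCount r₁ r₂ s := by
  filter_upwards [eventually_exists_two_le_iff_exists_pos h₁,
    eventually_exists_two_le_iff_exists_pos h₂] with i hi₁ hi₂
  classical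
  simp only [rootCount, totalRootCount, hi₁, hi₂]

theorem finite_setOf_rootCount_lt {n : ℤ} (h₁ : r₁ + 2 ≠ s) (h₂ : r₂ + 2 ≠ s)
    (hn : n ≤ totalRootCount r₁ r₂ s) : {i | rootCount r₁ r₂ s i < n}.Finite := by
  have h_eventually : ∀ᶠ i in Filter.cofinite, n ≤ rootCount r₁ r₂ s i := by
    rw [Nat.cofinite_eq_atTop]
    filter_upwards [eventually_rootCount_eq_totalRootCount h₁ h₂] with i hi
    exact hi ▸ hn
  simpa only [Filter.eventually_cofinite, not_le] using h_eventually

end RootCount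

section Kgen

variable {r₁ r₂ s : ℂ} {m : ℂ →₀ ℤ}

theorem one_mem_Kgen : 1 ∈ Kgen r₁ r₂ m :=
  .inl (.inl ⟨1, (map_one _).symm⟩)

theorem inv_X_sub_C_add_mem_Kgen (hs : m s < 0) (i : ℕ) :
    (RatFunc.X - RatFunc.C (s + 2 * (i : ℂ)))⁻¹ ∈ Kgen r₁ r₂ m :=
  .inl (.inr ⟨s, hs, i, 1, le_rfl, by lia, by rw [pow_one]⟩)

theorem inv_X_sub_C_sub_mem_Kgen {i : ℕ} (hi : 0 < i) (hs : rootCount r₁ r₂ s i < m s) :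
    (RatFunc.X - RatFunc.C (s - 2 * (i : ℂ)))⁻¹ ∈ Kgen r₁ r₂ m :=
  .inr ⟨s, (rootCount_nonneg r₁ r₂ s i).trans_lt hs, i, 1, hi, le_rfl, by lia, by rw [pow_one]⟩

theorem nonneg_of_fg_span_Kgen (hfg : (Submodule.span (Polynomial ℂ) (Kgen r₁ r₂ m)).FG) (s : ℂ) :
    0 ≤ m s := by
  by_contra! hs
  have h_inj : Function.Injective fun i : ℕ ↦ s + 2 * (i : ℂ) := fun i j hij ↦ by simpa using hij
  refine Set.infinite_of_injective_forall_mem h_inj (fun i ↦ ?_)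
    (finite_setOf_inv_X_sub_C_mem_of_fg hfg)
  exact Submodule.subset_span (inv_X_sub_C_add_mem_Kgen hs i)

theorem le_totalRootCount_of_fg_span_Kgen
    (hfg : (Submodule.span (Polynomial ℂ) (Kgen r₁ r₂ m)).FG) (s : ℂ) :
    m s ≤ totalRootCount r₁ r₂ s := by
  by_contra! hs
  have h_inj : Function.Injective fun i : ℕ ↦ s - 2 * ((i + 1 : ℕ) : ℂ) :=
    fun i j hij ↦ by simpa using hij
  refine Set.infinite_of_injective_forall_mem h_inj (fun i ↦ ?_)
    (finite_setOf_inv_X_sub_C_mem_of_fg hfg)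
  have h_lt := (rootCount_le_totalRootCount r₁ r₂ s (i + 1)).trans_lt hs
  exact Submodule.subset_span (inv_X_sub_C_sub_mem_Kgen i.succ_pos h_lt)

theorem Kgen_diff_range_algebraMap_subset (hm : ∀ s, 0 ≤ m s) :
    Kgen r₁ r₂ m \ Set.range (algebraMap (Polynomial ℂ) (RatFunc ℂ)) ⊆
      ⋃ s ∈ m.support, Set.image2
        (fun i k : ℕ ↦ ((RatFunc.X - RatFunc.C (s - 2 * (i : ℂ))) ^ k)⁻¹)
        {i | rootCount r₁ r₂ s i < m s} (Set.Iic (m s).toNat) := by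
  rintro x ⟨(⟨p, rfl⟩ | ⟨s, hs, -⟩) | ⟨s, hs, i, k, -, hk, hkm, rfl⟩, hx⟩
  · exact absurd ⟨p, rfl⟩ hx
  · exact absurd hs (hm s).not_gt
  · have h_count := rootCount_nonneg r₁ r₂ s i
    have hi : rootCount r₁ r₂ s i < m s := by lia
    have hk_le : k ≤ (m s).toNat := by lia
    exact Set.mem_biUnion (Finsupp.mem_support_iff.mpr hs.ne') (Set.mem_image2_of_mem hi hk_le)

theorem fg_span_Kgen (hm : ∀ s, 0 ≤ m s)
    (h_finite : ∀ s ∈ m.support, {i | rootCount r₁ r₂ s i < m s}.Finite) :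
    (Submodule.span (Polynomial ℂ) (Kgen r₁ r₂ m)).FG := by
  refine fg_span_of_finite_diff_range_algebraMap one_mem_Kgen
    (Set.Finite.subset ?_ (Kgen_diff_range_algebraMap_subset hm))
  exact m.support.finite_toSet.biUnion fun s hs ↦ (h_finite s hs).image2 _ (Set.finite_Iic _)

end Kgen

/-- The strip `ℂ_ω`, a set of representatives of `ℂ / 2ℤ`. -/
def strip (ω : ℝ) : Set ℂ :=
  {s | ω ≤ s.re ∧ s.re < ω + 2}

theorem add_two_notMem_strip {ω : ℝ} {r : ℂ} (hr : r.re + 2 < ω) : r + 2 ∉ strip ω :=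
  fun h ↦ hr.not_ge h.1

theorem stmt11_general {r₁ r₂ : ℂ} {m : ℂ →₀ ℤ} {S : Set ℂ} (h₁ : r₁ + 2 ∉ S) (h₂ : r₂ + 2 ∉ S)
    (hm : ∀ s ∈ m.support, s ∈ S) :
    (Submodule.span (Polynomial ℂ) (Kgen r₁ r₂ m)).FG ↔
      ∀ s ∈ S, 0 ≤ m s ∧ m s ≤ totalRootCount r₁ r₂ s := by
  refine ⟨fun hfg s _ ↦ ⟨nonneg_of_fg_span_Kgen hfg s, le_totalRootCount_of_fg_span_Kgen hfg s⟩,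
    fun h ↦ fg_span_Kgen (fun s ↦ ?_) fun s hs ↦ ?_⟩
  · by_cases hs : s ∈ m.support
    · exact (h s (hm s hs)).1
    · exact (Finsupp.notMem_support_iff.mp hs).ge
  · have hsS := hm s hs
    exact finite_setOf_rootCount_lt (ne_of_mem_of_not_mem hsS h₁).symm
      (ne_of_mem_of_not_mem hsS h₂).symm (h s hsS).2

open Classical in
/-- The module `L_u = K_u` is finitely generated over `ℂ[X]` if and only if, for every
`s ∈ ℂ_ω`, one has `0 ≤ m s ≤ #{j ∈ {1,2} : r_j ∈ s − 2ℤ_{>0}}`. -/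
theorem stmt11 (σ : RatFunc ℂ ≃ₐ[ℂ] RatFunc ℂ) (hσ : σ RatFunc.X = RatFunc.X - 2)
    (θ r₁ r₂ : ℂ)
    (hr : RatFunc.C θ - (RatFunc.X + 1) ^ 2 =
      -((RatFunc.X - RatFunc.C r₁) * (RatFunc.X - RatFunc.C r₂)))
    (ω : ℝ) (hω : ω = 3 + max r₁.re r₂.re)
    (c : ℂ) (hc : c ≠ 0) (m : ℂ →₀ ℤ)
    (hm : ∀ s ∈ m.support, ω ≤ s.re ∧ s.re < ω + 2)
    (u : RatFunc ℂ)
    (hu : u = RatFunc.C c * m.prod (fun t (n : ℤ) => (RatFunc.X - RatFunc.C t) ^ n)) :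
    (Submodule.span (Polynomial ℂ) (Kgen r₁ r₂ m)).FG ↔
      ∀ s : ℂ, (ω ≤ s.re ∧ s.re < ω + 2) →
        0 ≤ m s ∧
        m s ≤ (if ∃ l : ℕ, 0 < l ∧ r₁ = s - 2 * (l : ℂ) then 1 else 0) +
              (if ∃ l : ℕ, 0 < l ∧ r₂ = s - 2 * (l : ℂ) then 1 else 0) := by
  exact stmt11_general (S := strip ω) (add_two_notMem_strip (by grind))
    (add_two_notMem_strip (by grind)) hm

end
end

section
/- With u = c·∏_{t ∈ ℂ_0}(X − t)^{m(t)} as in the classification (c ∈ ℂˣ, m finitely supported with support in ℂ_0), the module F_u = D_u is finitely generated over ℂ[X] if and only if m is either the zero function, or m(s) ≠ 0 implies s = 0 and additionally m(0) = 1. -/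
noncomputable section

/-- The spanning set of `D_u`: (i) `ℂ[X]`; (ii) `1/(X − s − 2i)^k` for `m s < 0`, `i ≥ 0`,
`1 ≤ k ≤ −m s`; (iii) `1/(X − s + 2i)^k` for `s ≠ 0`, `m s > 0`, `i > 0`, `1 ≤ k ≤ m s`;
(iv) if `m 0 > 0`, also `1/(X + 2i)^k` for `i > 0`, `1 ≤ k ≤ m 0 − 1`. -/
def Dgen (m : ℂ →₀ ℤ) : Set (RatFunc ℂ) :=
  {x | ∃ p : Polynomial ℂ, x = algebraMap (Polynomial ℂ) (RatFunc ℂ) p} ∪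
  {x | ∃ s : ℂ, m s < 0 ∧ ∃ i k : ℕ, 1 ≤ k ∧ (k : ℤ) ≤ -m s ∧
    x = ((RatFunc.X - RatFunc.C (s + 2 * (i : ℂ))) ^ k)⁻¹} ∪
  {x | ∃ s : ℂ, s ≠ 0 ∧ 0 < m s ∧ ∃ i k : ℕ, 0 < i ∧ 1 ≤ k ∧ (k : ℤ) ≤ m s ∧
    x = ((RatFunc.X - RatFunc.C (s - 2 * (i : ℂ))) ^ k)⁻¹} ∪
  {x | 0 < m 0 ∧ ∃ i k : ℕ, 0 < i ∧ 1 ≤ k ∧ (k : ℤ) ≤ m 0 - 1 ∧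
    x = ((RatFunc.X + RatFunc.C (2 * (i : ℂ))) ^ k)⁻¹}

/-!
A finitely generated `ℂ[X]`-submodule of `ℂ(X)` has a common denominator `q ≠ 0`, and every `a` for
which the submodule contains `1 / (X - a)` is a root of `q`; so only finitely many such `a` occur.
A nonzero exponent `m s` contributes to `D_u` simple poles at infinitely many points of `s ± 2ℕ`,
the only exception being `m 0 = 1`, for which the range `1 ≤ k ≤ m 0 - 1` of orders is empty. Hence
`D_u` is finitely generated exactly when it has no poles at all, that is, when `D_u = ℂ[X]`.
-/

open Polynomial

section CommonDenominator

variable {R K : Type*} [CommRing R] [Field K]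

theorem dvd_of_isInteger_smul_inv [Algebra R K] [FaithfulSMul R K] {d q : R} (hd : d ≠ 0)
    (h : IsLocalization.IsInteger R (q • (algebraMap R K d)⁻¹)) : d ∣ q := by
  obtain ⟨r, hr⟩ := h
  have hd' : algebraMap R K d ≠ 0 := by simpa using hd
  rw [Algebra.smul_def, eq_mul_inv_iff_mul_eq₀ hd', ← map_mul] at hr
  exact Dvd.intro_left r (FaithfulSMul.algebraMap_injective R K hr)

theorem exists_ne_zero_forall_dvd_of_inv_mem_of_fg [Algebra R K] [IsFractionRing R K]
    {N : Submodule R K} (hN : N.FG) :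
    ∃ q : R, q ≠ 0 ∧ ∀ d : R, d ≠ 0 → (algebraMap R K d)⁻¹ ∈ N → d ∣ q := by
  have : Nontrivial R := (algebraMap R K).domain_nontrivial
  obtain ⟨q, hq, hqN⟩ := FractionalIdeal.isFractional_of_fg (S := nonZeroDivisors R) hN
  exact ⟨q, nonZeroDivisors.ne_zero hq, fun d hd hdN =>
    dvd_of_isInteger_smul_inv hd (hqN _ hdN)⟩

theorem finite_setOf_inv_X_sub_C_mem_of_fg_s15 [IsDomain R] [Algebra R[X] K] [IsFractionRing R[X] K]
    {N : Submodule R[X] K} (hN : N.FG) :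
    {a : R | (algebraMap R[X] K (X - C a))⁻¹ ∈ N}.Finite := by
  obtain ⟨q, hq, hdvd⟩ := exists_ne_zero_forall_dvd_of_inv_mem_of_fg hN
  exact (finite_setOfPred_isRoot hq).subset fun a ha =>
    dvd_iff_isRoot.mp (hdvd _ (X_sub_C_ne_zero a) ha)

end CommonDenominator

theorem not_fg_of_injective_of_forall_inv_X_sub_C_mem {R ι : Type*} [CommRing R] [IsDomain R]
    [Infinite ι] {N : Submodule R[X] (RatFunc R)} {a : ι → R} (ha : Function.Injective a)
    (hN : ∀ i, (RatFunc.X - RatFunc.C (a i))⁻¹ ∈ N) : ¬ N.FG := fun hfg =>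
  Set.infinite_of_injective_forall_mem ha (by simpa using hN)
    (finite_setOf_inv_X_sub_C_mem_of_fg_s15 hfg)

theorem nonneg_and_le_single_one_iff {α : Type*} {m : α →₀ ℤ} {a : α} :
    0 ≤ m ∧ m ≤ Finsupp.single a 1 ↔ m = 0 ∨ ((∀ s, m s ≠ 0 → s = a) ∧ m a = 1) := by
  classical
  simp only [Finsupp.le_def, Finsupp.ext_iff, Finsupp.coe_zero, Pi.zero_apply,
    Finsupp.single_apply]
  constructor
  · rintro ⟨hnonneg, hle⟩
    have hsupp (s : α) (hs : m s ≠ 0) : s = a := by grind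
    have ha : m a = 0 ∨ m a = 1 := by grind
    exact ha.imp (fun ha s => by grind) fun ha => ⟨hsupp, ha⟩
  · rintro (hzero | ⟨hsupp, ha⟩) <;> constructor <;> grind

namespace Dgen

variable {m : ℂ →₀ ℤ} {s : ℂ}

theorem algebraMap_mem (p : ℂ[X]) : algebraMap ℂ[X] (RatFunc ℂ) p ∈ Dgen m :=
  Or.inl (Or.inl (Or.inl ⟨p, rfl⟩))

theorem inv_X_sub_C_mem_of_neg (hs : m s < 0) (i : ℕ) :
    (RatFunc.X - RatFunc.C (s + 2 * (i : ℂ)))⁻¹ ∈ Dgen m :=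
  Or.inl (Or.inl (Or.inr ⟨s, hs, i, 1, le_rfl, by omega, by rw [pow_one]⟩))

-- The threshold `single 0 1` treats families (iii) and (iv) uniformly: it is `0` off the origin,
-- and `1` at the origin, where the orders stop at `m 0 - 1`.
theorem inv_X_sub_C_mem_of_single_lt (hs : Finsupp.single 0 1 s < m s) {i : ℕ} (hi : 0 < i) :
    (RatFunc.X - RatFunc.C (s - 2 * (i : ℂ)))⁻¹ ∈ Dgen m := by
  rcases eq_or_ne s 0 with rfl | hs0
  · rw [Finsupp.single_eq_same] at hs
    exact Or.inr ⟨by omega, i, 1, hi, le_rfl, by omega, by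
      rw [pow_one, zero_sub, map_neg, sub_neg_eq_add]⟩
  · rw [Finsupp.single_eq_of_ne hs0] at hs
    exact Or.inl (Or.inr ⟨s, hs0, hs, i, 1, hi, le_rfl, by omega, by rw [pow_one]⟩)

theorem nonneg_of_fg_span (hfg : (Submodule.span ℂ[X] (Dgen m)).FG) : 0 ≤ m := by
  intro s
  by_contra! hs
  have hinj : Function.Injective fun i : ℕ => s + 2 * (i : ℂ) := fun i j hij => by
    simpa using hij
  exact not_fg_of_injective_of_forall_inv_X_sub_C_mem hinj
    (fun i => Submodule.subset_span (inv_X_sub_C_mem_of_neg hs i)) hfg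

theorem le_single_of_fg_span (hfg : (Submodule.span ℂ[X] (Dgen m)).FG) :
    m ≤ Finsupp.single 0 1 := by
  intro s
  by_contra! hs
  have hinj : Function.Injective fun i : ℕ => s - 2 * ((i + 1 : ℕ) : ℂ) := fun i j hij => by
    simpa using hij
  exact not_fg_of_injective_of_forall_inv_X_sub_C_mem hinj
    (fun i => Submodule.subset_span (inv_X_sub_C_mem_of_single_lt hs i.succ_pos)) hfg

theorem span_eq_one (hnonneg : 0 ≤ m) (hle : m ≤ Finsupp.single 0 1) :
    Submodule.span ℂ[X] (Dgen m) = 1 := by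
  apply le_antisymm
  · rw [Submodule.span_le]
    rintro x (((⟨p, rfl⟩ | ⟨s, hs, -⟩) | ⟨s, hs0, hs, -⟩) | ⟨-, i, k, -, hk, hkm, -⟩)
    · exact Submodule.mem_one.mpr ⟨p, rfl⟩
    · exact absurd (hnonneg s) hs.not_ge
    · have hs' := hle s
      rw [Finsupp.single_eq_of_ne hs0] at hs'
      exact absurd hs' hs.not_ge
    · have h0 := hle 0
      rw [Finsupp.single_eq_same] at h0
      omega
  · rw [Submodule.one_le, ← map_one (algebraMap ℂ[X] (RatFunc ℂ))]
    exact Submodule.subset_span (algebraMap_mem 1)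

theorem fg_span_iff :
    (Submodule.span ℂ[X] (Dgen m)).FG ↔ 0 ≤ m ∧ m ≤ Finsupp.single 0 1 := by
  refine ⟨fun hfg => ⟨nonneg_of_fg_span hfg, le_single_of_fg_span hfg⟩, fun ⟨hnonneg, hle⟩ => ?_⟩
  rw [span_eq_one hnonneg hle, Submodule.one_eq_span]
  exact Submodule.fg_span_singleton 1

end Dgen

theorem stmt15_general (m : ℂ →₀ ℤ) :
    (Submodule.span (Polynomial ℂ) (Dgen m)).FG ↔
      (m = 0 ∨ ((∀ s : ℂ, m s ≠ 0 → s = 0) ∧ m 0 = 1)) :=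
  Dgen.fg_span_iff.trans nonneg_and_le_single_one_iff

/-- With `u = c·∏_{t ∈ ℂ_0}(X − t)^{m t}` in canonical form, the module `F_u = D_u` is
finitely generated over `ℂ[X]` if and only if `m` is the zero function, or `m s ≠ 0`
implies `s = 0` and additionally `m 0 = 1`. -/
theorem stmt15 (σ : RatFunc ℂ ≃ₐ[ℂ] RatFunc ℂ) (hσ : σ RatFunc.X = RatFunc.X - 2)
    (c : ℂ) (hc : c ≠ 0) (m : ℂ →₀ ℤ)
    (hm : ∀ s ∈ m.support, 0 ≤ s.re ∧ s.re < 2)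
    (u : RatFunc ℂ)
    (hu : u = RatFunc.C c * m.prod (fun t (n : ℤ) => (RatFunc.X - RatFunc.C t) ^ n)) :
    (Submodule.span (Polynomial ℂ) (Dgen m)).FG ↔
      (m = 0 ∨ ((∀ s : ℂ, m s ≠ 0 → s = 0) ∧ m 0 = 1)) := by
  exact stmt15_general m

end
end

section
/- Let σ₁ be the ℂ-algebra automorphism of ℂ(X) with σ₁(X) = X − 1, let u, v ∈ ℂ(X) be nonzero and λ, λ' ∈ ℂ. There exists a ℂ(X)-linear bijection Φ of ℂ(X) ⊕ ℂ(X) preserving each of the two direct summands (i.e. an even isomorphism) such that Φ∘P_u = P_v∘Φ and Φ∘Q_{u,λ} = Q_{v,λ'}∘Φ if and only if λ = λ' and v ∈ {±1}·G_{σ₁}·u, i.e. v = ±(r/σ₁(r))·u for some nonzero r ∈ ℂ(X). -/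
/-!
An even automorphism of `L ⊕ L` is a diagonal scaling `(x, y) ↦ (a x, d y)`. It intertwines `P_u`
with `P_v` exactly when `a u = σ(d) v` and `d u = σ(a) v`; it then intertwines the `Q` operators
exactly when their coefficients agree. Put `c = d / a`: the two equations become `c σ(c) = 1` and
`v = c (a / σ(a)) u`. So everything rests on solving `c σ(c) = 1` in `K(X)` for a translation `σ`.
Such a `c` is fixed by `σ²`. If `σ` has infinite order, then `c` is constant, because `K(X)` is
finite over `K(c)` for every nonconstant `c`; otherwise the order of `σ` is the odd characteristic
of `K`, and `σ` is a power of `σ²`. In both cases `σ(c) = c`, hence `c² = 1`.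
-/

section Translation

variable {K : Type*} [Field K]

theorem finiteDimensional_adjoin_simple_of_ne_C {c : RatFunc K} (hc : ¬∃ k, c = RatFunc.C k) :
    FiniteDimensional (IntermediateField.adjoin K {c}) (RatFunc K) :=
  have := IntermediateField.adjoin.finiteDimensional
    (c.isAlgebraic_adjoin_simple_X hc).isIntegral
  Module.Finite.equiv (RatFunc.IntermediateField.adjoinXEquiv _).toLinearEquiv

theorem exists_eq_C_of_apply_eq_self {τ : RatFunc K ≃ₐ[K] RatFunc K} (hτ : ¬IsOfFinOrder τ)
    {c : RatFunc K} (hc : τ c = c) : ∃ k, c = RatFunc.C k := by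
  by_contra hC
  have := finiteDimensional_adjoin_simple_of_ne_C hC
  let F := IntermediateField.adjoin K {c}
  have : Finite F.fixingSubgroup := .of_equiv _ F.fixingSubgroupEquiv.symm.toEquiv
  have hmem : τ ∈ F.fixingSubgroup := by
    rw [F.mem_fixingSubgroup_iff]
    exact (IntermediateField.forall_mem_adjoin_smul_eq_self_iff K τ).2 (by simpa using hc)
  exact hτ (Submonoid.isOfFinOrder_coe.2 (isOfFinOrder_of_finite (⟨τ, hmem⟩ : F.fixingSubgroup)))

variable {σ : RatFunc K ≃ₐ[K] RatFunc K} {a : K}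

theorem translation_pow_apply_X (hσ : σ RatFunc.X = RatFunc.X - RatFunc.C a) (n : ℕ) :
    (σ ^ n) RatFunc.X = RatFunc.X - RatFunc.C (n * a) := by
  induction n with
  | zero => simp
  | succ n ih =>
    have hC : ∀ k, (σ ^ n) (RatFunc.C k) = RatFunc.C k := (σ ^ n).commutes
    rw [pow_succ, AlgEquiv.mul_apply, hσ, map_sub, ih, hC, Nat.cast_succ, add_one_mul, map_add,
      sub_sub]

theorem algEquiv_ratFunc_eq_one_iff {τ : RatFunc K ≃ₐ[K] RatFunc K} :
    τ = 1 ↔ τ RatFunc.X = RatFunc.X := by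
  have h := IntermediateField.forall_mem_adjoin_smul_eq_self_iff K
    (S := {(RatFunc.X : RatFunc K)}) τ
  simpa [RatFunc.adjoin_X, AlgEquiv.ext_iff] using h

theorem orderOf_translation (ha : a ≠ 0) (hσ : σ RatFunc.X = RatFunc.X - RatFunc.C a) :
    orderOf σ = ringChar K := by
  refine Nat.dvd_right_iff_eq.1 fun n ↦ ?_
  rw [orderOf_dvd_iff_pow_eq_one, ← ringChar.spec, algEquiv_ratFunc_eq_one_iff,
    translation_pow_apply_X hσ, sub_eq_self, map_eq_zero, mul_eq_zero, or_iff_left ha]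

theorem translation_apply_eq_self_of_sq_apply_eq_self (h2 : (2 : K) ≠ 0) (ha : a ≠ 0)
    (hσ : σ RatFunc.X = RatFunc.X - RatFunc.C a) {c : RatFunc K} (hc : (σ ^ 2) c = c) :
    σ c = c := by
  by_cases hfin : IsOfFinOrder σ
  · have hord := orderOf_translation ha hσ
    have hprime : (ringChar K).Prime :=
      CharP.char_prime_of_ne_zero K (hord ▸ hfin.orderOf_pos.ne')
    have hcop : Nat.Coprime 2 (orderOf σ) := by
      rw [hord, Nat.coprime_primes Nat.prime_two hprime]
      exact fun h ↦ h2 (mod_cast (ringChar.spec K 2).2 h.symm.dvd)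
    obtain ⟨m, hm⟩ := exists_pow_eq_self_of_coprime hcop
    exact smul_eq_self_of_mem_zpowers ⟨m, by simpa using hm⟩ hc
  · obtain ⟨k, rfl⟩ := exists_eq_C_of_apply_eq_self (by simpa using hfin) hc
    exact σ.commutes k

theorem mul_translation_eq_one_iff (h2 : (2 : K) ≠ 0) (ha : a ≠ 0)
    (hσ : σ RatFunc.X = RatFunc.X - RatFunc.C a) {c : RatFunc K} :
    c * σ c = 1 ↔ c = 1 ∨ c = -1 := by
  constructor
  · intro hc
    have hinv : σ c = c⁻¹ := eq_inv_of_mul_eq_one_right hc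
    have hsq : (σ ^ 2) c = c := by
      rw [pow_two, AlgEquiv.mul_apply, hinv, map_inv₀, hinv, inv_inv]
    rw [translation_apply_eq_self_of_sq_apply_eq_self h2 ha hσ hsq] at hc
    exact mul_self_eq_one_iff.1 hc
  · rintro (rfl | rfl) <;> simp

end Translation

section Intertwining

/-- Evenness of an automorphism of `R ⊕ R`, whose first summand is even and second summand odd. -/
def IsEven {R : Type*} [CommSemiring R] (Φ : (R × R) ≃ₗ[R] R × R) : Prop :=
  (∀ z : R × R, z.2 = 0 → (Φ z).2 = 0) ∧ ∀ z : R × R, z.1 = 0 → (Φ z).1 = 0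

/-- The even automorphism of `R ⊕ R` scaling the even summand by `a` and the odd one by `d`. -/
def evenScaling {R : Type*} [CommSemiring R] (a d : Rˣ) : (R × R) ≃ₗ[R] R × R :=
  (LinearEquiv.smulOfUnit a).prodCongr (LinearEquiv.smulOfUnit d)

theorem evenScaling_apply {R : Type*} [CommSemiring R] (a d : Rˣ) (z : R × R) :
    evenScaling a d z = (a * z.1, d * z.2) :=
  rfl

theorem isEven_iff_exists_eq_evenScaling {R : Type*} [CommSemiring R] {Φ : (R × R) ≃ₗ[R] R × R} :
    IsEven Φ ↔ ∃ a d, Φ = evenScaling a d := by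
  constructor
  · rintro ⟨h₂, h₁⟩
    have hΦ (z : R × R) : Φ z = ((Φ (1, 0)).1 * z.1, (Φ (0, 1)).2 * z.2) := by
      have hz : z = z.1 • (1, 0) + z.2 • (0, 1) := by simp
      conv_lhs => rw [hz, map_add, map_smul, map_smul]
      ext <;> simp [h₂ (1, 0) rfl, h₁ (0, 1) rfl, mul_comm]
    obtain ⟨z, hz⟩ := Φ.surjective (1, 1)
    rw [hΦ, Prod.mk.injEq] at hz
    exact ⟨.mkOfMulEqOne _ _ hz.1, .mkOfMulEqOne _ _ hz.2, LinearEquiv.ext hΦ⟩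
  · rintro ⟨a, d, rfl⟩
    constructor <;> intro z hz <;> simp [evenScaling_apply, hz]

variable {L : Type*} [Field L] (σ : L ≃+* L)

/-- The operator `P_u` of the module `M_{u,λ}`, for an arbitrary field automorphism `σ`. -/
def twistP (u : L) (z : L × L) : L × L :=
  (σ z.2 * u, σ z.1 * u)

/-- The operator `Q_{u,λ}` of the module `M_{u,λ}`, for an arbitrary field automorphism `σ` and with
arbitrary scalars `α` and `β` in place of `(X - λ) / 2` and `(X + λ + 1) / 2`. -/
def twistQ (α β u : L) (z : L × L) : L × L :=
  (α * σ.symm z.2 * (σ.symm u)⁻¹, β * σ.symm z.1 * (σ.symm u)⁻¹)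

variable {σ} {u v α β α' β' : L}

theorem semiconj_evenScaling_twistP_iff {a d : Lˣ} :
    Function.Semiconj (evenScaling a d) (twistP σ u) (twistP σ v) ↔
      a * u = σ d * v ∧ d * u = σ a * v := by
  simp only [Function.Semiconj, evenScaling_apply, twistP, Prod.mk.injEq, map_mul]
  constructor
  · intro h
    simpa using h (1, 1)
  · rintro ⟨ha, hd⟩ z
    constructor
    · linear_combination σ z.2 * ha
    · linear_combination σ z.1 * hd

theorem semiconj_evenScaling_twistQ_iff (hu : u ≠ 0) {a d : Lˣ}
    (ha : a * u = σ d * v) (hd : d * u = σ a * v) :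
    Function.Semiconj (evenScaling a d) (twistQ σ α β u) (twistQ σ α' β' v) ↔
      α = α' ∧ β = β' := by
  have hinv {b e : Lˣ} (h : e * u = σ b * v) :
      σ.symm e * (σ.symm v)⁻¹ = b * (σ.symm u)⁻¹ := by
    have hv : v ≠ 0 := right_ne_zero_of_mul (h ▸ mul_ne_zero e.ne_zero hu)
    have hσu : σ.symm u ≠ 0 := by simpa using hu
    have hσv : σ.symm v ≠ 0 := by simpa using hv
    have hsymm : σ.symm e * σ.symm u = b * σ.symm v := by simpa using congrArg σ.symm h
    field_simp
    rw [hsymm, mul_comm]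
  have hQ (z : L × L) : twistQ σ α' β' v (evenScaling a d z) =
      (a * (α' * σ.symm z.2 * (σ.symm u)⁻¹), d * (β' * σ.symm z.1 * (σ.symm u)⁻¹)) := by
    simp only [evenScaling_apply, twistQ, map_mul, Prod.mk.injEq]
    constructor
    · linear_combination α' * σ.symm z.2 * hinv hd
    · linear_combination β' * σ.symm z.1 * hinv ha
  constructor
  · intro h
    simpa [hQ, evenScaling_apply, twistQ, hu] using (h (1, 1)).trans (hQ (1, 1))
  · rintro ⟨rfl, rfl⟩ z
    exact (hQ z).symm

theorem exists_units_mul_eq_iff (hu : u ≠ 0) :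
    (∃ a d : Lˣ, a * u = σ d * v ∧ d * u = σ a * v) ↔
      ∃ r : L, r ≠ 0 ∧ ∃ c, c * σ c = 1 ∧ v = c * (r / σ r * u) := by
  constructor
  · rintro ⟨a, d, ha, hd⟩
    have hv : v ≠ 0 := right_ne_zero_of_mul (hd ▸ mul_ne_zero d.ne_zero hu)
    have hσ (b : Lˣ) : σ b ≠ 0 := by simp
    refine ⟨a, a.ne_zero, d / a, ?_, ?_⟩
    · rw [map_div₀, div_mul_div_comm, div_eq_one_iff_eq (mul_ne_zero a.ne_zero (hσ a))]
      apply mul_right_cancel₀ (mul_ne_zero hu hv)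
      linear_combination σ d * v * hd - σ a * v * ha
    · have := hσ a
      field_simp
      linear_combination -hd
  · rintro ⟨r, hr, c, hc, rfl⟩
    have hc0 : c ≠ 0 := left_ne_zero_of_mul_eq_one hc
    have hσr : σ r ≠ 0 := by simpa using hr
    refine ⟨.mk0 r hr, .mk0 (c * r) (mul_ne_zero hc0 hr), ?_, ?_⟩
    · simp only [Units.val_mk0, map_mul]
      field_simp
      linear_combination -hc
    · simp only [Units.val_mk0]
      field_simp

theorem exists_isEven_semiconj_iff (hu : u ≠ 0) :
    (∃ Φ, IsEven Φ ∧ Function.Semiconj Φ (twistP σ u) (twistP σ v) ∧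
      Function.Semiconj Φ (twistQ σ α β u) (twistQ σ α' β' v)) ↔
    (α = α' ∧ β = β') ∧ ∃ r : L, r ≠ 0 ∧ ∃ c, c * σ c = 1 ∧ v = c * (r / σ r * u) := by
  rw [← exists_units_mul_eq_iff hu]
  constructor
  · rintro ⟨Φ, hΦ, hP, hQ⟩
    obtain ⟨a, d, rfl⟩ := isEven_iff_exists_eq_evenScaling.1 hΦ
    obtain ⟨ha, hd⟩ := semiconj_evenScaling_twistP_iff.1 hP
    exact ⟨(semiconj_evenScaling_twistQ_iff hu ha hd).1 hQ, a, d, ha, hd⟩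
  · rintro ⟨hαβ, a, d, ha, hd⟩
    exact ⟨evenScaling a d, isEven_iff_exists_eq_evenScaling.2 ⟨a, d, rfl⟩,
      semiconj_evenScaling_twistP_iff.2 ⟨ha, hd⟩,
      (semiconj_evenScaling_twistQ_iff hu ha hd).2 hαβ⟩

end Intertwining

theorem stmt18_general {K : Type*} [Field K] (h2 : (2 : K) ≠ 0)
    (σ₁ : RatFunc K ≃ₐ[K] RatFunc K) (hσ₁ : σ₁ RatFunc.X = RatFunc.X - 1)
    (u v : RatFunc K) (hu : u ≠ 0) (l l' : K)
    (P : RatFunc K → RatFunc K × RatFunc K → RatFunc K × RatFunc K)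
    (Q : RatFunc K → K → RatFunc K × RatFunc K → RatFunc K × RatFunc K)
    (hP : ∀ w z, P w z = (σ₁ z.2 * w, σ₁ z.1 * w))
    (hQ : ∀ w μ z, Q w μ z =
      ((RatFunc.X - RatFunc.C μ) / 2 * σ₁.symm z.2 * (σ₁.symm w)⁻¹,
       (RatFunc.X + RatFunc.C μ + 1) / 2 * σ₁.symm z.1 * (σ₁.symm w)⁻¹)) :
    (∃ Φ : (RatFunc K × RatFunc K) ≃ₗ[RatFunc K] RatFunc K × RatFunc K,
      (∀ z : RatFunc K × RatFunc K, z.2 = 0 → (Φ z).2 = 0) ∧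
      (∀ z : RatFunc K × RatFunc K, z.1 = 0 → (Φ z).1 = 0) ∧
      (∀ z, Φ (P u z) = P v (Φ z)) ∧
      (∀ z, Φ (Q u l z) = Q v l' (Φ z))) ↔
    (l = l' ∧ ∃ r : RatFunc K, r ≠ 0 ∧
      (v = r / σ₁ r * u ∨ v = -(r / σ₁ r * u))) := by
  obtain rfl : P = twistP σ₁.toRingEquiv := funext₂ hP
  obtain rfl : Q = fun w μ ↦ twistQ σ₁.toRingEquiv ((RatFunc.X - RatFunc.C μ) / 2)
      ((RatFunc.X + RatFunc.C μ + 1) / 2) w := funext fun w ↦ funext₂ (hQ w)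
  have hcoeff : (RatFunc.X - RatFunc.C l) / 2 = (RatFunc.X - RatFunc.C l') / 2 ∧
      (RatFunc.X + RatFunc.C l + 1) / 2 = (RatFunc.X + RatFunc.C l' + 1) / 2 ↔ l = l' := by
    have : (2 : RatFunc K) ≠ 0 := by rwa [← map_ofNat RatFunc.C 2, map_ne_zero]
    simp [div_left_inj' this, RatFunc.C_injective.eq_iff]
  have hshift : σ₁ RatFunc.X = RatFunc.X - RatFunc.C 1 := by rw [hσ₁, map_one]
  have htwist (r : RatFunc K) : (∃ c, c * σ₁ c = 1 ∧ v = c * (r / σ₁ r * u)) ↔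
      v = r / σ₁ r * u ∨ v = -(r / σ₁ r * u) := by
    simp only [mul_translation_eq_one_iff h2 one_ne_zero hshift, or_and_right, exists_or,
      exists_eq_left, one_mul, neg_one_mul]
  simp_rw [← htwist, ← hcoeff]
  simpa only [IsEven, Function.Semiconj, and_assoc, AlgEquiv.coe_ringEquiv] using
    exists_isEven_semiconj_iff (σ := σ₁.toRingEquiv) hu

/-- Even-isomorphism criterion for the `osp(1|2)`-modules `M_{u,λ}`:  there is a
`ℂ(X)`-linear bijection `Φ` of `ℂ(X) ⊕ ℂ(X)` preserving each summand and intertwining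
`(P_u, Q_{u,λ})` with `(P_v, Q_{v,λ'})` if and only if `λ = λ'` and
`v = ±(r/σ₁(r))·u` for some nonzero `r ∈ ℂ(X)`, i.e. `v ∈ {±1}·G_{σ₁}·u`. -/
theorem stmt18 (σ₁ : RatFunc ℂ ≃ₐ[ℂ] RatFunc ℂ) (hσ₁ : σ₁ RatFunc.X = RatFunc.X - 1)
    (u v : RatFunc ℂ) (hu : u ≠ 0) (hv : v ≠ 0) (l l' : ℂ)
    (P : RatFunc ℂ → RatFunc ℂ × RatFunc ℂ → RatFunc ℂ × RatFunc ℂ)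
    (Q : RatFunc ℂ → ℂ → RatFunc ℂ × RatFunc ℂ → RatFunc ℂ × RatFunc ℂ)
    (hP : ∀ w z, P w z = (σ₁ z.2 * w, σ₁ z.1 * w))
    (hQ : ∀ w μ z, Q w μ z =
      ((RatFunc.X - RatFunc.C μ) / 2 * σ₁.symm z.2 * (σ₁.symm w)⁻¹,
       (RatFunc.X + RatFunc.C μ + 1) / 2 * σ₁.symm z.1 * (σ₁.symm w)⁻¹)) :
    (∃ Φ : (RatFunc ℂ × RatFunc ℂ) ≃ₗ[RatFunc ℂ] RatFunc ℂ × RatFunc ℂ,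
      (∀ z : RatFunc ℂ × RatFunc ℂ, z.2 = 0 → (Φ z).2 = 0) ∧
      (∀ z : RatFunc ℂ × RatFunc ℂ, z.1 = 0 → (Φ z).1 = 0) ∧
      (∀ z, Φ (P u z) = P v (Φ z)) ∧
      (∀ z, Φ (Q u l z) = Q v l' (Φ z))) ↔
    (l = l' ∧ ∃ r : RatFunc ℂ, r ≠ 0 ∧
      (v = r / σ₁ r * u ∨ v = -(r / σ₁ r * u))) :=
  stmt18_general two_ne_zero σ₁ hσ₁ u v hu l l' P Q hP hQ
end
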